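/- Assume condition (G) holds and that there exists ζ=(ξ,η) with φ(ζ)=1 and η>0 such that φ is finite in a neighbourhood of ζ and in a neighbourhood of (0,η); let v=E_ζ[S_1]/E_ζ[R_1]. Then V(ζ)>0, and for every a≥0 and b∈ℝ: for all sequences y_n→∞ and x_n>0 with (x_n−v y_n)/y_n^{1/2}→0, one has G_{a,b}(x_n,y_n) / ( x_n^{−1/2} e^{x_n ξ + y_n η} ) → D(a,b), where D(a,b)=C(a,b)·(2π V(ζ))^{−1/2}. -/

import Mathlib

open MeasureTheory Filter Set ENNReal

/-- Convolution of two measures on `ℝ × ℝ` (coordinatewise addition). -/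
noncomputable def mconv (μ ν : Measure (ℝ × ℝ)) : Measure (ℝ × ℝ) :=
  Measure.map (fun p : (ℝ × ℝ) × (ℝ × ℝ) => p.1 + p.2) (μ.prod ν)

/-- `n`-fold convolution power `F^{⋆n}` (with `F^{⋆0} = δ_{(0,0)}`). -/
noncomputable def iterConv (F : Measure (ℝ × ℝ)) : ℕ → Measure (ℝ × ℝ)
  | 0 => Measure.dirac 0
  | n + 1 => mconv (iterConv F n) F

/-- Bivariate Laplace transform `φ(u,w) = ∬ e^{-us-wr} F(ds,dr)`. -/
noncomputable def biLaplace (F : Measure (ℝ × ℝ)) (u w : ℝ) : ℝ≥0∞ :=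
  ∫⁻ p, ENNReal.ofReal (Real.exp (-(u * p.1 + w * p.2))) ∂F

/-- Topological support of a measure on `ℝ × ℝ`. -/
def msupport (F : Measure (ℝ × ℝ)) : Set (ℝ × ℝ) :=
  {p | ∀ U : Set (ℝ × ℝ), IsOpen U → p ∈ U → 0 < F U}

/-- `G_{a,b}(x,y) = P(N(x) < ∞, S_{N(x)} > x + a, R_{N(x)} ≤ y + b)` for the (possibly
killed) random walk with step distribution `F` and nonnegative steps: since the first
component is nondecreasing, `N(x) = n + 1` exactly when `S_n ≤ x < S_{n+1}`, so the
probability is the displayed renewal sum. -/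
noncomputable def hoglundG (F : Measure (ℝ × ℝ)) (a b x y : ℝ) : ℝ≥0∞ :=
  ∑' n : ℕ, ∫⁻ p in {p : ℝ × ℝ | p.1 ≤ x},
    F {q : ℝ × ℝ | x + a < p.1 + q.1 ∧ p.2 + q.2 ≤ y + b} ∂(iterConv F n)

/-!
Tilting by `ζ` turns `F` into a nonlattice probability law with positive mean `m`, and turns
`e^{-(xξ + yη)} G_{a,b}(x, y)` into the renewal sum `∑ₖ E g((x, y) - Sₖ)` of a fixed integrable
function `g`, the overshoot kernel. The asymptotics are thus those of a local renewal theorem: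
`√N ∑ₖ E g(zₙ - Sₖ)` tends to `∫ g / √(2π W)` when `zₙ = N m + o(√N)`, where `W` is the variance of
the step in the direction `(-m₂, m₁)`.

For a kernel with compactly supported Fourier transform, `N E g(zₙ - Sₖ)` with `k = N + u √N`
converges by the local limit theorem to a Gaussian density at `-u m` and is `O(1 / (1 + u²))`, so
the renewal sum is asymptotically a Riemann sum for the integral of that density along `ℝ m`.
Applied to a strictly positive kernel `K` and all its modulations `e^{i⟨θ, z⟩} K(z)`, this says that
the characteristic functions of the renewal measures weighted by `K` converge. Weak convergence of
these finite measures then extends the limit to all a.e. continuous `g` with `0 ≤ g ≤ M K`. Two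
shifted Fejér kernels in each coordinate give a `K` that decays slowly enough to dominate the
overshoot kernel.
-/

namespace Hoglund

open scoped Topology Real

/-! ### Fejér kernels -/

/-- The tent function `t ↦ (1 - |t|)⁺`, the Fourier transform of the Fejér kernel. -/
noncomputable def tent (t : ℝ) : ℝ := max (1 - |t|) 0

/-- The Fejér kernel `s ↦ 2 (1 - cos s) / s²`, written with `sinc` to be regular at `0`. -/
noncomputable def fejer (s : ℝ) : ℝ := Real.sinc (s / 2) ^ 2

lemma continuous_tent : Continuous tent := by unfold tent; fun_prop

lemma continuous_fejer : Continuous fejer :=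
  (Real.continuous_sinc.comp (continuous_id.div_const 2)).pow 2

lemma tent_neg (t : ℝ) : tent (-t) = tent t := by simp [tent]

lemma tent_eq_zero {t : ℝ} (h : 1 ≤ |t|) : tent t = 0 := max_eq_right (by linarith)

lemma support_tent_subset : Function.support tent ⊆ Icc (-1) 1 := fun _ ht =>
  abs_le.1 (not_lt.1 fun h => ht (tent_eq_zero h.le))

lemma hasCompactSupport_tent : HasCompactSupport tent :=
  .of_support_subset_isCompact isCompact_Icc support_tent_subset

lemma integral_one_sub_mul_cos {s : ℝ} (hs : s ≠ 0) :
    ∫ t in (0 : ℝ)..1, (1 - t) * Real.cos (s * t) = (1 - Real.cos s) / s ^ 2 := by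
  have hderiv (t : ℝ) : HasDerivAt
      (fun t => (1 - t) * (Real.sin (s * t) / s) - Real.cos (s * t) / s ^ 2)
      ((1 - t) * Real.cos (s * t)) t := by
    have hlin : HasDerivAt (fun t : ℝ => s * t) s t := by simpa using (hasDerivAt_id t).const_mul s
    refine ((((hasDerivAt_id t).const_sub 1).mul (hlin.sin.div_const s)).sub
      (hlin.cos.div_const (s ^ 2))).congr_deriv ?_
    simp only [id]
    field_simp
    ring
  rw [intervalIntegral.integral_eq_sub_of_hasDerivAt (fun t _ => hderiv t)
    (Continuous.intervalIntegrable (by fun_prop) _ _)]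
  simp only [mul_one, mul_zero, Real.cos_zero, Real.sin_zero, sub_self]
  ring

lemma fejer_eq {s : ℝ} (hs : s ≠ 0) : fejer s = 2 * ((1 - Real.cos s) / s ^ 2) := by
  have hcos : Real.cos s = 1 - 2 * Real.sin (s / 2) ^ 2 := by
    rw [Real.sin_sq_eq_half_sub, mul_div_cancel₀ s two_ne_zero]
    ring
  rw [fejer, Real.sinc_of_ne_zero (by positivity), hcos]
  field_simp
  ring

lemma integral_tent_mul_cos (s : ℝ) : ∫ t, tent t * Real.cos (s * t) = fejer s := by
  have heven : ∀ t, tent t * Real.cos (s * t) = tent |t| * Real.cos (s * |t|) := fun t => by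
    rcases abs_choice t with h | h <;> simp [h, tent_neg]
  have hIoc : ∫ t in Ioi (0 : ℝ), tent t * Real.cos (s * t) =
      ∫ t in (0 : ℝ)..1, (1 - t) * Real.cos (s * t) := by
    rw [intervalIntegral.integral_of_le zero_le_one,
      setIntegral_eq_of_subset_of_forall_sdiff_eq_zero (s := Ioc 0 1) measurableSet_Ioi
        Ioc_subset_Ioi_self]
    · refine setIntegral_congr_fun measurableSet_Ioc fun t ht => ?_
      simp only [tent, abs_of_pos ht.1, max_eq_left (sub_nonneg.2 ht.2)]
    · intro t ht
      have : 1 < t := not_le.1 fun h => ht.2 ⟨ht.1, h⟩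
      rw [tent_eq_zero (this.le.trans (le_abs_self t)), zero_mul]
  rw [integral_congr_ae (ae_of_all _ heven),
    integral_comp_abs (f := fun t => tent t * Real.cos (s * t)), hIoc]
  rcases eq_or_ne s 0 with rfl | hs
  · simp only [zero_mul, Real.cos_zero, mul_one, fejer,
      intervalIntegral.integral_comp_sub_left (fun t : ℝ => t), integral_id]
    norm_num
  · rw [integral_one_sub_mul_cos hs, fejer_eq hs]

lemma integrable_tent_mul {g : ℝ → ℂ} (hg : Continuous g) :
    Integrable fun t => (tent t : ℂ) * g t :=
  ((Complex.continuous_ofReal.comp continuous_tent).mul hg).integrable_of_hasCompactSupport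
    (hasCompactSupport_tent.comp_left Complex.ofReal_zero).mul_right

lemma integral_tent_mul_exp (s : ℝ) :
    ∫ t : ℝ, (tent t : ℂ) * Complex.exp (s * t * Complex.I) = fejer s := by
  -- The tent is even, so only the even part `cos` of the exponential contributes.
  have hneg : ∫ t : ℝ, (tent t : ℂ) * Complex.exp (s * t * Complex.I) =
      ∫ t : ℝ, (tent t : ℂ) * Complex.exp (-(s * t * Complex.I)) := by
    rw [← integral_neg_eq_self]
    simp only [tent_neg, Complex.ofReal_neg, mul_neg, neg_mul]
  have htwice : 2 * ∫ t : ℝ, (tent t : ℂ) * Complex.exp (s * t * Complex.I) = 2 * fejer s := by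
    rw [two_mul]
    nth_rewrite 2 [hneg]
    rw [← integral_add (integrable_tent_mul (by fun_prop)) (integrable_tent_mul (by fun_prop)),
      ← integral_tent_mul_cos, ← integral_complex_ofReal, ← integral_const_mul]
    refine integral_congr_ae (ae_of_all _ fun t => ?_)
    simp only [Complex.ofReal_mul, Complex.ofReal_cos, Complex.cos]
    ring_nf
  exact mul_left_cancel₀ two_ne_zero htwice

lemma fejer_nonneg (s : ℝ) : 0 ≤ fejer s := sq_nonneg _

lemma fejer_neg (s : ℝ) : fejer (-s) = fejer s := by
  rw [fejer, neg_div, Real.sinc_neg, fejer]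

lemma fejer_le_one (s : ℝ) : fejer s ≤ 1 :=
  (sq_le_one_iff_abs_le_one _).2 (Real.abs_sinc_le_one _)

lemma fejer_mul_sq (s : ℝ) : fejer s * s ^ 2 = 4 * Real.sin (s / 2) ^ 2 := by
  rcases eq_or_ne s 0 with rfl | hs
  · simp
  · rw [fejer, Real.sinc_of_ne_zero (by positivity)]
    field_simp
    ring

/-- The sum of two Fejér kernels shifted by `π`. Each vanishes where the other does not, so the
sum is comparable to `1 / (1 + s²)` on the whole line. -/
noncomputable def fejerPair (s : ℝ) : ℝ := fejer s + fejer (s + π)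

lemma continuous_fejerPair : Continuous fejerPair :=
  continuous_fejer.add (continuous_fejer.comp (continuous_id.add_const π))

lemma fejerPair_nonneg (s : ℝ) : 0 ≤ fejerPair s := add_nonneg (fejer_nonneg _) (fejer_nonneg _)

lemma pi_sq_le : π ^ 2 ≤ 16 := by nlinarith [Real.pi_lt_four, Real.pi_pos]

lemma fejerPair_mul_le (s : ℝ) : fejerPair s * (1 + s ^ 2) ≤ 100 := by
  have hshift : fejer (s + π) * s ^ 2 ≤ fejer (s + π) * (2 * (s + π) ^ 2 + 2 * π ^ 2) :=
    mul_le_mul_of_nonneg_left (by nlinarith [sq_nonneg (s + 2 * π)]) (fejer_nonneg _)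
  have hpi : fejer (s + π) * π ^ 2 ≤ 16 := by
    nlinarith [pi_sq_le, sq_nonneg π, fejer_le_one (s + π)]
  have h₁ := fejer_mul_sq s
  have h₂ := fejer_mul_sq (s + π)
  unfold fejerPair
  nlinarith [Real.sin_sq_le_one (s / 2), Real.sin_sq_le_one ((s + π) / 2), fejer_le_one s,
    fejer_le_one (s + π)]

lemma one_div_le_fejerPair_mul (s : ℝ) : 1 / 32 ≤ fejerPair s * (1 + s ^ 2) := by
  have hpyth : fejer s * s ^ 2 + fejer (s + π) * (s + π) ^ 2 = 4 := by
    rw [fejer_mul_sq, fejer_mul_sq, add_div, Real.sin_add_pi_div_two, ← mul_add,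
      Real.sin_sq_add_cos_sq, mul_one]
  have h₁ : fejer s * s ^ 2 ≤ fejer s * (32 * (1 + s ^ 2)) :=
    mul_le_mul_of_nonneg_left (by nlinarith [sq_nonneg s]) (fejer_nonneg _)
  have h₂ : fejer (s + π) * (s + π) ^ 2 ≤ fejer (s + π) * (32 * (1 + s ^ 2)) :=
    mul_le_mul_of_nonneg_left (by nlinarith [sq_nonneg (s - π), pi_sq_le]) (fejer_nonneg _)
  unfold fejerPair
  linarith

lemma fejerPair_pos (s : ℝ) : 0 < fejerPair s :=
  pos_of_mul_pos_left (lt_of_lt_of_le (by norm_num) (one_div_le_fejerPair_mul s)) (by positivity)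

lemma integrable_fejerPair : Integrable fejerPair := by
  refine (integrable_inv_one_add_sq.const_mul 100).mono'
    continuous_fejerPair.aestronglyMeasurable (ae_of_all _ fun s => ?_)
  rw [Real.norm_of_nonneg (fejerPair_nonneg s), ← div_eq_mul_inv, le_div_iff₀ (by positivity)]
  exact fejerPair_mul_le s

lemma integrable_fejer : Integrable fejer := by
  refine integrable_fejerPair.mono' continuous_fejer.aestronglyMeasurable (ae_of_all _ fun s => ?_)
  rw [Real.norm_of_nonneg (fejer_nonneg s)]
  exact le_add_of_nonneg_right (fejer_nonneg _)

lemma fourier_tent :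
    FourierTransform.fourier (fun t : ℝ => (tent t : ℂ)) =
      fun w : ℝ => (fejer (2 * π * w) : ℂ) := by
  ext w
  rw [Real.fourier_real_eq_integral_exp_smul, ← fejer_neg, ← integral_tent_mul_exp]
  refine integral_congr_ae (ae_of_all _ fun t => ?_)
  simp only [smul_eq_mul, mul_comm (tent t : ℂ)]
  push_cast
  ring_nf

lemma integral_fejer_mul_exp (θ : ℝ) :
    ∫ s : ℝ, (fejer s : ℂ) * Complex.exp (θ * s * Complex.I) = 2 * π * tent θ := by
  have hcont : Continuous fun t : ℝ => (tent t : ℂ) :=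
    Complex.continuous_ofReal.comp continuous_tent
  have hint : Integrable fun t : ℝ => (tent t : ℂ) :=
    (continuous_tent.integrable_of_hasCompactSupport hasCompactSupport_tent).ofReal
  have hinv := congrFun (hcont.fourierInv_fourier_eq hint
    (by rw [fourier_tent]; exact (integrable_fejer.comp_mul_left' (by positivity)).ofReal)) θ
  rw [fourier_tent, Real.fourierInv_eq_fourier_neg,
    Real.fourier_real_eq_integral_exp_smul] at hinv
  have hscale := Measure.integral_comp_mul_left
    (fun s : ℝ => (fejer s : ℂ) * Complex.exp (θ * s * Complex.I)) (2 * π)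
  rw [abs_of_nonneg (by positivity), Complex.real_smul] at hscale
  rw [← hinv]
  have hpi : (2 * π : ℂ) ≠ 0 := by exact_mod_cast Real.two_pi_pos.ne'
  push_cast at hscale ⊢
  rw [eq_comm, ← eq_inv_mul_iff_mul_eq₀ hpi, ← hscale]
  refine integral_congr_ae (ae_of_all _ fun v => ?_)
  simp only [smul_eq_mul, mul_comm (fejer _ : ℂ)]
  ring_nf

/-- The Fourier transform of `fejerPair`: translation by `π` becomes modulation of the tent. -/
noncomputable def modulatedTent (t : ℝ) : ℂ := tent t * (1 + Complex.exp (π * t * Complex.I))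

lemma continuous_modulatedTent : Continuous modulatedTent :=
  (Complex.continuous_ofReal.comp continuous_tent).mul (by fun_prop)

lemma hasCompactSupport_modulatedTent : HasCompactSupport modulatedTent :=
  (hasCompactSupport_tent.comp_left Complex.ofReal_zero).mul_right

lemma integral_modulatedTent_mul_exp (s : ℝ) :
    ∫ t : ℝ, modulatedTent t * Complex.exp (s * t * Complex.I) = fejerPair s := by
  rw [fejerPair, Complex.ofReal_add, ← integral_tent_mul_exp s, ← integral_tent_mul_exp (s + π),
    ← integral_add (integrable_tent_mul (by fun_prop)) (integrable_tent_mul (by fun_prop))]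
  refine integral_congr_ae (ae_of_all _ fun t => ?_)
  simp only [modulatedTent, Complex.ofReal_add, add_mul, Complex.exp_add]
  ring

lemma integrable_mul_exp {f : ℝ → ℝ} (hf : Integrable f) (θ : ℝ) :
    Integrable fun s : ℝ => (f s : ℂ) * Complex.exp (θ * s * Complex.I) := by
  refine hf.ofReal.mul_bdd (c := 1) (Continuous.aestronglyMeasurable (by fun_prop))
    (ae_of_all _ fun s => ?_)
  rw [← Complex.ofReal_mul, Complex.norm_exp_ofReal_mul_I]

lemma integral_fejerPair_mul_exp (θ : ℝ) :
    ∫ s : ℝ, (fejerPair s : ℂ) * Complex.exp (θ * s * Complex.I) =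
      2 * π * modulatedTent (-θ) := by
  have hshift : ∫ s : ℝ, (fejer (s + π) : ℂ) * Complex.exp (θ * s * Complex.I) =
      2 * π * tent θ * Complex.exp (π * (-θ : ℝ) * Complex.I) := by
    rw [← integral_fejer_mul_exp, ← integral_mul_const]
    refine Eq.trans ?_ (integral_add_right_eq_self _ π)
    refine integral_congr_ae (ae_of_all _ fun s => ?_)
    simp only [mul_assoc, ← Complex.exp_add]
    push_cast
    ring_nf
  simp only [fejerPair, Complex.ofReal_add, add_mul]
  rw [integral_add (integrable_mul_exp integrable_fejer θ)
    (integrable_mul_exp (integrable_fejer.comp_add_right π) θ), integral_fejer_mul_exp, hshift,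
    modulatedTent, tent_neg]
  ring

/-! ### Characteristic functions of nonlattice laws -/

section CharFun

open ProbabilityTheory

lemma one_sub_cos_eq (r d : ℝ) : 1 - Real.cos (r * d) = r ^ 2 * (d ^ 2 / 2 * fejer (r * d)) := by
  have hfejer := fejer_mul_sq (r * d)
  rw [Real.sin_sq_eq_half_sub, mul_div_cancel₀ _ two_ne_zero] at hfejer
  linear_combination -hfejer / 2

lemma exists_eq_add_mul_of_fejer_eq_zero {r d : ℝ} (h : d ^ 2 / 2 * fejer (r * d) = 0) :
    ∃ m : ℤ, d = 2 * π / r * m := by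
  have hcos : Real.cos (r * d) = 1 := by
    linarith [one_sub_cos_eq r d, mul_eq_zero_of_right (r ^ 2) h]
  rcases eq_or_ne r 0 with rfl | hr
  · have hd : d = 0 := by simpa [fejer] using h
    exact ⟨0, by simp [hd]⟩
  · obtain ⟨m, hm⟩ := (Real.cos_eq_one_iff _).1 hcos
    exact ⟨m, by field_simp; linarith⟩

lemma integrable_norm_sub_sq {X : Type*} [NormedAddCommGroup X] [MeasurableSpace X]
    {Q : Measure X} [IsProbabilityMeasure Q] (hQ : MemLp id 2 Q) :
    Integrable (fun x : X × X => ‖x.1 - x.2‖ ^ 2) (Q.prod Q) :=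
  ((hQ.comp_fst Q).sub (hQ.comp_snd Q)).integrable_norm_pow two_ne_zero

variable {E : Type*} [NormedAddCommGroup E] [NormedSpace ℝ E]

lemma norm_charFunDefect_integrand_le {r : ℝ} {L : StrongDual ℝ E} (hL : ‖L‖ = 1) (p : E) :
    ‖L p ^ 2 / 2 * fejer (r * L p)‖ ≤ ‖p‖ ^ 2 := by
  have hLp : |L p| ≤ ‖p‖ := by simpa [hL] using L.le_opNorm p
  have hsq : L p ^ 2 ≤ ‖p‖ ^ 2 := sq_le_sq.2 (by rwa [abs_norm])
  have hfejer := fejer_nonneg (r * L p)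
  rw [Real.norm_of_nonneg (by positivity)]
  nlinarith [mul_le_of_le_one_right (sq_nonneg (L p)) (fejer_le_one (r * L p)), sq_nonneg (L p)]

lemma continuous_charFunDefect_integrand :
    Continuous fun z : (ℝ × StrongDual ℝ E) × E =>
      z.1.2 z.2 ^ 2 / 2 * fejer (z.1.1 * z.1.2 z.2) := by
  have := continuous_fejer
  fun_prop

variable [MeasurableSpace E] {Q : Measure E}

/-- A measure is nonlattice if no nonzero linear functional maps it into an arithmetic
progression `c + hℤ` (possibly degenerate: `h = 0` is allowed). -/
def Nonlattice (Q : Measure E) : Prop :=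
  ∀ L : StrongDual ℝ E, L ≠ 0 → ∀ h c : ℝ, ¬ ∀ᵐ p ∂Q, ∃ m : ℤ, L p = c + h * m

variable [BorelSpace E]

lemma integrable_exp_mul_I [IsFiniteMeasure Q] (L : StrongDual ℝ E) :
    Integrable (fun p => Complex.exp (L p * Complex.I)) Q :=
  .of_bound (Continuous.aestronglyMeasurable (by fun_prop)) 1
    (ae_of_all _ fun p => (Complex.norm_exp_ofReal_mul_I (L p)).le)

lemma continuous_charFunDual [IsFiniteMeasure Q] : Continuous (charFunDual Q) := by
  refine continuous_of_dominated (bound := fun _ => 1) (fun L => ?_) (fun L => ?_)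
    (integrable_const _) (ae_of_all _ fun p => ?_)
  · exact (integrable_exp_mul_I L).aestronglyMeasurable
  · exact ae_of_all _ fun p => (Complex.norm_exp_ofReal_mul_I (L p)).le
  · simp only [BoundedContinuousFunction.probCharDual_apply]
    fun_prop

lemma tendsto_exp_mul_charFunDual_pow [IsProbabilityMeasure Q] {L : StrongDual ℝ E}
    (hL : MemLp L 2 Q) :
    Tendsto (fun k : ℕ => (Complex.exp (((√k)⁻¹ * Q[L] : ℝ) * Complex.I) *
      charFunDual Q (-((√k)⁻¹ • L))) ^ k) atTop (𝓝 (Complex.exp (-(Var[L; Q] : ℂ) / 2))) := by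
  have hmul (r : ℝ) : Complex.exp ((r * Q[L] : ℝ) * Complex.I) * charFunDual Q (-(r • L)) =
      ∫ p, Complex.exp ((-(r * (L p - Q[L])) : ℝ) * Complex.I) ∂Q := by
    rw [charFunDual_apply, ← integral_const_mul]
    refine integral_congr_ae (ae_of_all _ fun p => ?_)
    simp only [← Complex.exp_add, neg_apply, smul_apply, smul_eq_mul]
    push_cast
    ring_nf
  simp only [hmul]
  rcases eq_or_ne Var[L; Q] 0 with hvar | hvar
  · have hone (r : ℝ) : ∫ p, Complex.exp ((-(r * (L p - Q[L])) : ℝ) * Complex.I) ∂Q = 1 := by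
      have : ∫ _, (1 : ℂ) ∂Q = 1 := by simp
      rw [← this]
      refine integral_congr_ae ?_
      filter_upwards [ae_eq_integral_of_variance_eq_zero hL hvar] with p hp
      simp [hp]
    simp only [hone, hvar, one_pow, Complex.ofReal_zero, neg_zero, zero_div, Complex.exp_zero,
      tendsto_const_nhds]
  have hσ : √Var[L; Q] ≠ 0 := (Real.sqrt_pos.2 ((variance_nonneg L Q).lt_of_ne' hvar)).ne'
  let X : E → ℝ := fun p => -((L p - Q[L]) / √Var[L; Q])
  have hX : AEMeasurable X Q := Continuous.aemeasurable (by fun_prop)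
  have hmean : Q[X] = 0 := by
    simp only [X, integral_neg, integral_div,
      integral_sub (hL.integrable one_le_two) (integrable_const _), integral_const, probReal_univ,
      one_smul, sub_self, zero_div, neg_zero]
  have hsq : Q[X ^ 2] = 1 := by
    simp only [X, Pi.pow_apply, neg_sq, div_pow, integral_div, Real.sq_sqrt (variance_nonneg L Q)]
    rw [← variance_eq_integral (by fun_prop), div_self hvar]
  have hlim := tendsto_charFun_inv_sqrt_mul_pow hX hmean hsq √Var[L; Q]
  rw [← Complex.ofReal_pow, Real.sq_sqrt (variance_nonneg L Q)] at hlim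
  refine hlim.congr fun k => ?_
  rw [charFun_apply_real, integral_map hX (Continuous.aestronglyMeasurable (by fun_prop))]
  congr 1
  refine integral_congr_ae (ae_of_all _ fun p => ?_)
  have hσ' : (√Var[L; Q] : ℂ) ≠ 0 := by exact_mod_cast hσ
  simp only [X]
  push_cast
  field_simp

variable [SecondCountableTopology E]

lemma norm_charFunDual_sq [IsProbabilityMeasure Q] (L : StrongDual ℝ E) :
    ‖charFunDual Q L‖ ^ 2 = ∫ x, Real.cos (L (x.1 - x.2)) ∂(Q.prod Q) := by
  have hprod : ((‖charFunDual Q L‖ ^ 2 : ℝ) : ℂ) =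
      ∫ x, Complex.exp (L (x.1 - x.2) * Complex.I) ∂(Q.prod Q) := by
    rw [← Complex.normSq_eq_norm_sq, ← Complex.mul_conj, charFunDual_apply, ← integral_conj,
      ← integral_prod_mul]
    refine integral_congr_ae (ae_of_all _ fun x => ?_)
    simp only [← Complex.exp_conj, ← Complex.exp_add, map_mul, Complex.conj_ofReal,
      Complex.conj_I, map_sub, Complex.ofReal_sub]
    ring_nf
  have hint : Integrable (fun x : E × E => Complex.exp (L (x.1 - x.2) * Complex.I)) (Q.prod Q) :=
    .of_bound (Continuous.aestronglyMeasurable (by fun_prop)) 1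
      (ae_of_all _ fun x => (Complex.norm_exp_ofReal_mul_I _).le)
  rw [← Complex.ofReal_re (‖charFunDual Q L‖ ^ 2), hprod]
  simpa only [RCLike.re_to_complex, Complex.exp_ofReal_mul_I_re] using (integral_re hint).symm

/-- `charFunDefect Q (r, L) = (1 - |E e^{i r L}|²) / r²`, extended continuously to `r = 0`, where
it is the variance of `L`. -/
noncomputable def charFunDefect (Q : Measure E) (y : ℝ × StrongDual ℝ E) : ℝ :=
  ∫ x : E × E, y.2 (x.1 - x.2) ^ 2 / 2 * fejer (y.1 * y.2 (x.1 - x.2)) ∂(Q.prod Q)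

lemma one_sub_norm_charFunDual_smul_sq [IsProbabilityMeasure Q] (r : ℝ) (L : StrongDual ℝ E) :
    1 - ‖charFunDual Q (r • L)‖ ^ 2 = r ^ 2 * charFunDefect Q (r, L) := by
  have hcos : Integrable (fun x : E × E => Real.cos ((r • L) (x.1 - x.2))) (Q.prod Q) :=
    .of_bound (Continuous.aestronglyMeasurable (by fun_prop)) 1
      (ae_of_all _ fun x => Real.abs_cos_le_one _)
  have hone : (1 : ℝ) = ∫ _ : E × E, (1 : ℝ) ∂(Q.prod Q) := by simp
  rw [norm_charFunDual_sq, charFunDefect, hone, ← integral_sub (integrable_const _) hcos,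
    ← integral_const_mul]
  refine integral_congr_ae (ae_of_all _ fun x => ?_)
  simp only [smul_apply, smul_eq_mul, one_sub_cos_eq]

lemma continuousOn_charFunDefect [IsProbabilityMeasure Q] (hQ : MemLp id 2 Q) :
    ContinuousOn (charFunDefect Q) (univ ×ˢ Metric.sphere 0 1) := by
  refine continuousOn_of_dominated (bound := fun x : E × E => ‖x.1 - x.2‖ ^ 2)
    (fun y _ => ?_) (fun y hy => ?_) (integrable_norm_sub_sq hQ) (ae_of_all _ fun x => ?_)
  · exact (continuous_charFunDefect_integrand.comp (continuous_const.prodMk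
      (continuous_fst.sub continuous_snd))).aestronglyMeasurable
  · exact ae_of_all _ fun x => norm_charFunDefect_integrand_le (by simpa using hy.2) _
  · exact (continuous_charFunDefect_integrand.comp
      (continuous_id.prodMk continuous_const)).continuousOn

lemma charFunDefect_pos [IsProbabilityMeasure Q] (hQ : MemLp id 2 Q) (hnonlattice : Nonlattice Q)
    (r : ℝ) {L : StrongDual ℝ E} (hL : ‖L‖ = 1) : 0 < charFunDefect Q (r, L) := by
  have hnonneg (x : E × E) :
      0 ≤ L (x.1 - x.2) ^ 2 / 2 * fejer (r * L (x.1 - x.2)) :=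
    mul_nonneg (by positivity) (fejer_nonneg _)
  refine (integral_nonneg hnonneg).lt_of_ne' fun hzero => ?_
  have hint : Integrable (fun x : E × E => L (x.1 - x.2) ^ 2 / 2 * fejer (r * L (x.1 - x.2)))
      (Q.prod Q) :=
    (integrable_norm_sub_sq hQ).mono'
      (continuous_charFunDefect_integrand.comp (f := fun x : E × E => ((r, L), x.1 - x.2))
        (by fun_prop)).aestronglyMeasurable
      (ae_of_all _ fun x => norm_charFunDefect_integrand_le hL _)
  obtain ⟨p₀, hp₀⟩ :=
    (Measure.ae_ae_of_ae_prod ((integral_eq_zero_iff_of_nonneg hnonneg hint).1 hzero)).exists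
  refine hnonlattice L (norm_ne_zero_iff.1 (hL ▸ one_ne_zero)) (2 * π / r) (L p₀) ?_
  filter_upwards [hp₀] with p hp
  obtain ⟨m, hm⟩ := exists_eq_add_mul_of_fejer_eq_zero hp
  refine ⟨-m, ?_⟩
  rw [map_sub] at hm
  push_cast
  linarith

/-- Near `0` the bound comes from the variance and elsewhere from the nonlattice property;
compactness of `[0, A] × sphere` treats both at once through `charFunDefect`. -/
lemma exists_norm_charFunDual_le_exp [FiniteDimensional ℝ E] [IsProbabilityMeasure Q]
    (hQ : MemLp id 2 Q) (hnonlattice : Nonlattice Q) (A : ℝ) :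
    ∃ c > 0, ∀ L : StrongDual ℝ E, ‖L‖ ≤ A → ‖charFunDual Q L‖ ≤ Real.exp (-c * ‖L‖ ^ 2) := by
  have hcompact : IsCompact (Icc 0 A ×ˢ Metric.sphere (0 : StrongDual ℝ E) 1) :=
    isCompact_Icc.prod (isCompact_sphere _ _)
  obtain ⟨c, hc, hmin⟩ : ∃ c > 0, ∀ y ∈ Icc 0 A ×ˢ Metric.sphere (0 : StrongDual ℝ E) 1,
      c ≤ charFunDefect Q y :=
    hcompact.exists_forall_le'
      ((continuousOn_charFunDefect hQ).mono (prod_mono_left (subset_univ _)))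
      fun y hy => charFunDefect_pos hQ hnonlattice y.1 (by simpa using hy.2)
  refine ⟨c / 2, by positivity, fun L hLA => ?_⟩
  rcases eq_or_ne L 0 with rfl | hL
  · simp [charFunDual_apply]
  have hnorm : ‖L‖ ≠ 0 := norm_ne_zero_iff.2 hL
  have hdefect := hmin (‖L‖, ‖L‖⁻¹ • L) ⟨⟨norm_nonneg _, hLA⟩, by simp [norm_smul, hnorm]⟩
  have hsq := one_sub_norm_charFunDual_smul_sq (Q := Q) ‖L‖ (‖L‖⁻¹ • L)
  rw [smul_inv_smul₀ hnorm] at hsq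
  refine le_of_sq_le_sq ?_ (Real.exp_pos _).le
  calc ‖charFunDual Q L‖ ^ 2 ≤ (2 : ℕ) * (-(c / 2) * ‖L‖ ^ 2) + 1 := by
        push_cast
        nlinarith [sq_nonneg ‖L‖]
    _ ≤ Real.exp (-(c / 2) * ‖L‖ ^ 2) ^ 2 := by
        rw [← Real.exp_nat_mul]
        exact Real.add_one_le_exp _

end CharFun

/-! ### The local limit theorem in Fourier form -/

section Pairing

open ProbabilityTheory

/-- The standard bilinear pairing `t.1 * z.1 + t.2 * z.2` of the plane with itself. -/
noncomputable def dot : (ℝ × ℝ) →L[ℝ] StrongDual ℝ (ℝ × ℝ) :=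
  (ContinuousLinearMap.fst ℝ ℝ ℝ).smulRight (ContinuousLinearMap.fst ℝ ℝ ℝ) +
    (ContinuousLinearMap.snd ℝ ℝ ℝ).smulRight (ContinuousLinearMap.snd ℝ ℝ ℝ)

lemma dot_apply (t z : ℝ × ℝ) : dot t z = t.1 * z.1 + t.2 * z.2 := rfl

lemma dual_eq_dot (L : StrongDual ℝ (ℝ × ℝ)) : L = dot (L (1, 0), L (0, 1)) := by
  ext <;> simp [dot_apply]

lemma norm_le_norm_dot (t : ℝ × ℝ) : ‖t‖ ≤ ‖dot t‖ := by
  refine max_le ?_ ?_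
  · simpa [dot_apply] using (dot t).le_opNorm (1, 0)
  · simpa [dot_apply] using (dot t).le_opNorm (0, 1)

lemma exists_norm_charFunDual_dot_le {Q : Measure (ℝ × ℝ)} [IsProbabilityMeasure Q]
    (hQ : MemLp id 2 Q) (hnonlattice : Nonlattice Q) (A : ℝ) :
    ∃ c > 0, ∀ t : ℝ × ℝ, ‖t‖ ≤ A → ‖charFunDual Q (dot t)‖ ≤ Real.exp (-c * ‖t‖ ^ 2) := by
  obtain ⟨c, hc, hbound⟩ := exists_norm_charFunDual_le_exp hQ hnonlattice (‖dot‖ * A)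
  refine ⟨c, hc, fun t ht => (hbound (dot t) ((dot.le_opNorm t).trans (by gcongr))).trans ?_⟩
  rw [Real.exp_le_exp, neg_mul, neg_mul, neg_le_neg_iff]
  gcongr
  exact norm_le_norm_dot t

end Pairing

section ConvolutionPowers

open ProbabilityTheory

lemma mconv_eq_conv (μ ν : Measure (ℝ × ℝ)) : mconv μ ν = Measure.conv μ ν := rfl

lemma lintegral_mconv {μ ν : Measure (ℝ × ℝ)} [SFinite ν] {g : ℝ × ℝ → ℝ≥0∞}
    (hg : Measurable g) : ∫⁻ p, g p ∂(mconv μ ν) = ∫⁻ p, ∫⁻ q, g (p + q) ∂ν ∂μ :=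
  Measure.lintegral_conv hg

variable {Q : Measure (ℝ × ℝ)}

instance sFinite_iterConv [SFinite Q] (n : ℕ) : SFinite (iterConv Q n) := by
  induction n with
  | zero => unfold iterConv; infer_instance
  | succ n ih => unfold iterConv mconv; infer_instance

lemma iterConv_add [SFinite Q] (m n : ℕ) :
    iterConv Q (m + n) = mconv (iterConv Q m) (iterConv Q n) := by
  induction n with
  | zero => simp only [mconv_eq_conv, iterConv, add_zero, Measure.conv_dirac_zero]
  | succ n ih =>
    rw [← add_assoc, iterConv, ih, iterConv]
    simp only [mconv_eq_conv, Measure.conv_assoc]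

variable [IsProbabilityMeasure Q]

instance isProbabilityMeasure_iterConv (n : ℕ) : IsProbabilityMeasure (iterConv Q n) := by
  induction n with
  | zero => unfold iterConv; infer_instance
  | succ n ih =>
    unfold iterConv mconv
    exact Measure.isProbabilityMeasure_map (by fun_prop)

lemma charFunDual_iterConv (n : ℕ) (L : StrongDual ℝ (ℝ × ℝ)) :
    charFunDual (iterConv Q n) L = charFunDual Q L ^ n := by
  induction n with
  | zero => simp [iterConv]
  | succ n ih => rw [iterConv, mconv_eq_conv, charFunDual_conv, ih, pow_succ]

variable {L : StrongDual ℝ (ℝ × ℝ)} (hL : MemLp L 2 Q)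
include hL

lemma memLp_iterConv (n : ℕ) : MemLp L 2 (iterConv Q n) := by
  induction n with
  | zero => exact .of_bound (by fun_prop) 0 (by simp [iterConv, ae_dirac_eq])
  | succ n ih =>
    rw [iterConv, mconv, memLp_map_measure_iff (by fun_prop) (by fun_prop)]
    exact ((ih.comp_fst Q).add (hL.comp_snd _)).ae_eq (ae_of_all _ fun p => (map_add L _ _).symm)

lemma integral_iterConv (n : ℕ) : ∫ p, L p ∂(iterConv Q n) = n * ∫ p, L p ∂Q := by
  induction n with
  | zero => simp [iterConv]
  | succ n ih =>
    have hint := (memLp_iterConv hL n).integrable one_le_two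
    rw [iterConv, mconv, integral_map (by fun_prop) (by fun_prop)]
    simp only [map_add]
    rw [integral_add (hint.comp_fst Q) ((hL.integrable one_le_two).comp_snd _),
      integral_fun_fst L, integral_fun_snd L, ih]
    simp [add_mul]

lemma variance_iterConv (n : ℕ) : Var[L; iterConv Q n] = n * Var[L; Q] := by
  induction n with
  | zero => simp [iterConv]
  | succ n ih =>
    rw [iterConv, mconv, variance_map (by fun_prop) (by fun_prop)]
    calc Var[L ∘ fun p : (ℝ × ℝ) × (ℝ × ℝ) => p.1 + p.2; (iterConv Q n).prod Q]
        = Var[fun p => L p.1 + L p.2; (iterConv Q n).prod Q] := by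
          simp only [Function.comp_def, map_add]
      _ = (n + 1 : ℕ) * Var[L; Q] := by
          rw [variance_add_prod (memLp_iterConv hL n) hL, ih]
          push_cast
          ring

end ConvolutionPowers

section LocalLimit

open ProbabilityTheory

lemma integrable_exp_neg_mul_norm_sq {c : ℝ} (hc : 0 < c) :
    Integrable fun t : ℝ × ℝ => Real.exp (-c * ‖t‖ ^ 2) := by
  have hgauss := integrable_exp_neg_mul_sq (half_pos hc)
  refine (hgauss.mul_prod hgauss).mono' (Continuous.aestronglyMeasurable (by fun_prop))
    (ae_of_all _ fun t => ?_)
  have hfst : t.1 ^ 2 ≤ ‖t‖ ^ 2 := sq_le_sq.2 (by simpa using norm_fst_le t)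
  have hsnd : t.2 ^ 2 ≤ ‖t‖ ^ 2 := sq_le_sq.2 (by simpa using norm_snd_le t)
  rw [Real.norm_of_nonneg (Real.exp_pos _).le, ← Real.exp_add, Real.exp_le_exp]
  nlinarith

/-- The Fourier synthesis `∫ g(t) e^{i⟨t, z⟩} dt` on the plane. -/
noncomputable def planeFourier (g : ℝ × ℝ → ℂ) (z : ℝ × ℝ) : ℂ :=
  ∫ t, g t * Complex.exp (dot t z * Complex.I)

/-- The integrand of `walkFourier`. -/
noncomputable def walkFourierIntegrand (Q : Measure (ℝ × ℝ)) (g : ℝ × ℝ → ℂ) (k : ℕ)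
    (z t : ℝ × ℝ) : ℂ :=
  g t * Complex.exp (dot t z * Complex.I) * charFunDual Q (-dot t) ^ k

/-- The expectation of `planeFourier g (z - ·)` after `k` steps of the random walk with step
law `Q`, written on the Fourier side; see `walkFourier_eq_integral`. -/
noncomputable def walkFourier (Q : Measure (ℝ × ℝ)) (g : ℝ × ℝ → ℂ) (k : ℕ) (z : ℝ × ℝ) : ℂ :=
  ∫ t, walkFourierIntegrand Q g k z t

variable {Q : Measure (ℝ × ℝ)} {g : ℝ × ℝ → ℂ}

lemma natCast_mul_walkFourier (k : ℕ) (z : ℝ × ℝ) :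
    k * walkFourier Q g k z = ∫ t, walkFourierIntegrand Q g k z ((√k)⁻¹ • t) := by
  rw [Measure.integral_comp_smul volume (walkFourierIntegrand Q g k z) (√k)⁻¹, walkFourier]
  have hjac : |((√(k : ℝ))⁻¹ ^ Module.finrank ℝ (ℝ × ℝ))⁻¹| = k := by
    rw [Module.finrank_prod, Module.finrank_self]
    norm_num
  rw [hjac, Complex.real_smul, Complex.ofReal_natCast]

variable [IsProbabilityMeasure Q]

lemma continuous_walkFourierIntegrand (hg : Continuous g) (k : ℕ) (z : ℝ × ℝ) :
    Continuous (walkFourierIntegrand Q g k z) := by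
  have := continuous_charFunDual (Q := Q)
  unfold walkFourierIntegrand
  fun_prop

lemma walkFourier_eq_integral (hg : Integrable g) (k : ℕ) (z : ℝ × ℝ) :
    walkFourier Q g k z = ∫ p, planeFourier g (z - p) ∂(iterConv Q k) := by
  unfold planeFourier
  rw [integral_integral_swap]
  · refine integral_congr_ae (ae_of_all _ fun t => ?_)
    simp only [walkFourierIntegrand, ← charFunDual_iterConv]
    rw [charFunDual_apply, ← integral_const_mul]
    refine integral_congr_ae (ae_of_all _ fun p => ?_)
    simp only [mul_assoc, ← Complex.exp_add, map_sub, neg_apply]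
    push_cast
    ring_nf
  · have hexp : Continuous fun x : (ℝ × ℝ) × (ℝ × ℝ) =>
        Complex.exp (dot x.2 (z - x.1) * Complex.I) := by fun_prop
    exact (hg.comp_snd (iterConv Q k)).mul_bdd hexp.aestronglyMeasurable
      (ae_of_all _ fun x => (Complex.norm_exp_ofReal_mul_I _).le)

lemma exists_norm_walkFourierIntegrand_le (hQ : MemLp id 2 Q) (hnonlattice : Nonlattice Q)
    (hg : Continuous g) (hsupp : HasCompactSupport g) :
    ∃ B : ℝ, ∃ c > 0, ∀ (k : ℕ) (z t : ℝ × ℝ),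
      ‖walkFourierIntegrand Q g k z t‖ ≤ B * Real.exp (-(c * k) * ‖t‖ ^ 2) := by
  obtain ⟨B, hB⟩ := hsupp.exists_bound_of_continuous hg
  obtain ⟨A, hA⟩ := hsupp.isCompact.isBounded.exists_norm_le
  obtain ⟨c, hc, hchar⟩ := exists_norm_charFunDual_dot_le hQ hnonlattice A
  refine ⟨B, c, hc, fun k z t => ?_⟩
  by_cases ht : t ∈ tsupport g
  · have hpow := pow_le_pow_left₀ (norm_nonneg _) (hchar (-t) (by simpa using hA t ht)) k
    rw [map_neg, norm_neg, ← Real.exp_nat_mul] at hpow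
    rw [walkFourierIntegrand, norm_mul, norm_mul, Complex.norm_exp_ofReal_mul_I, mul_one, norm_pow]
    calc ‖g t‖ * ‖charFunDual Q (-dot t)‖ ^ k
        ≤ B * Real.exp (k * (-c * ‖t‖ ^ 2)) := by
          gcongr
          · exact (norm_nonneg _).trans (hB t)
          · exact hB t
      _ = B * Real.exp (-(c * k) * ‖t‖ ^ 2) := by ring_nf
  · rw [walkFourierIntegrand, image_eq_zero_of_notMem_tsupport ht, zero_mul, zero_mul, norm_zero]
    exact mul_nonneg ((norm_nonneg _).trans (hB t)) (Real.exp_pos _).le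

lemma exists_norm_walkFourierIntegrand_smul_le (hQ : MemLp id 2 Q) (hnonlattice : Nonlattice Q)
    (hg : Continuous g) (hsupp : HasCompactSupport g) :
    ∃ bound : ℝ × ℝ → ℝ, Integrable bound ∧ ∀ k : ℕ, k ≠ 0 → ∀ z t : ℝ × ℝ,
      ‖walkFourierIntegrand Q g k z ((√k)⁻¹ • t)‖ ≤ bound t := by
  obtain ⟨B, c, hc, hbound⟩ := exists_norm_walkFourierIntegrand_le hQ hnonlattice hg hsupp
  refine ⟨fun t => B * Real.exp (-c * ‖t‖ ^ 2), (integrable_exp_neg_mul_norm_sq hc).const_mul B,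
    fun k hk z t => (hbound k z _).trans_eq ?_⟩
  have hk' : (k : ℝ) ≠ 0 := Nat.cast_ne_zero.2 hk
  rw [norm_smul, mul_pow, norm_inv, inv_pow, Real.norm_of_nonneg (Real.sqrt_nonneg _),
    Real.sq_sqrt k.cast_nonneg]
  congr 2
  field_simp

lemma exists_natCast_mul_norm_walkFourier_le (hQ : MemLp id 2 Q) (hnonlattice : Nonlattice Q)
    (hg : Continuous g) (hsupp : HasCompactSupport g) :
    ∃ C : ℝ, ∀ (k : ℕ) (z : ℝ × ℝ), k * ‖walkFourier Q g k z‖ ≤ C := by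
  obtain ⟨bound, hint, hbound⟩ :=
    exists_norm_walkFourierIntegrand_smul_le hQ hnonlattice hg hsupp
  refine ⟨∫ t, bound t, fun k z => ?_⟩
  rcases eq_or_ne k 0 with rfl | hk
  · simpa using integral_nonneg fun t => (norm_nonneg _).trans (hbound 1 one_ne_zero z t)
  · calc k * ‖walkFourier Q g k z‖ = ‖(k : ℂ) * walkFourier Q g k z‖ := by simp
      _ ≤ ∫ t, bound t := by
        rw [natCast_mul_walkFourier]
        exact norm_integral_le_of_norm_le hint (ae_of_all _ (hbound k hk z))

lemma tendsto_walkFourierIntegrand_smul (hQ : MemLp id 2 Q) (hg : Continuous g) {k : ℕ → ℕ}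
    {z : ℕ → ℝ × ℝ} {w : ℝ × ℝ} (hk : Tendsto k atTop atTop)
    (hz : Tendsto (fun n => (√(k n))⁻¹ • (z n - (k n : ℝ) • ∫ p, p ∂Q)) atTop (𝓝 w))
    (t : ℝ × ℝ) :
    Tendsto (fun n => walkFourierIntegrand Q g (k n) (z n) ((√(k n))⁻¹ • t)) atTop
      (𝓝 (g 0 * (Complex.exp (-(Var[dot t; Q] : ℂ) / 2) *
        Complex.exp (dot t w * Complex.I)))) := by
  have hscale : Tendsto (fun n => (√(k n : ℝ))⁻¹ • t) atTop (𝓝 0) := by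
    rw [← zero_smul ℝ t]
    exact (tendsto_inv_atTop_zero.comp (Real.tendsto_sqrt_atTop.comp
      (tendsto_natCast_atTop_atTop.comp hk))).smul_const t
  have hexp : Continuous fun w : ℝ × ℝ => Complex.exp (dot t w * Complex.I) := by fun_prop
  have hclt := (tendsto_exp_mul_charFunDual_pow ((dot t).comp_memLp' hQ)).comp hk
  have hmean : ∫ p, dot t p ∂Q = dot t (∫ p, p ∂Q) :=
    (dot t).integral_comp_comm (hQ.integrable one_le_two)
  refine (((hg.tendsto 0).comp hscale).mul (hclt.mul ((hexp.tendsto w).comp hz))).congr fun n => ?_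
  simp only [Function.comp_def, walkFourierIntegrand, hmean, mul_pow]
  rw [mul_assoc (g _), mul_right_comm, ← Complex.exp_nat_mul, ← Complex.exp_add]
  simp only [map_smul, map_sub, smul_apply, smul_eq_mul]
  push_cast
  ring_nf

lemma tendsto_natCast_mul_walkFourier (hQ : MemLp id 2 Q) (hnonlattice : Nonlattice Q)
    (hg : Continuous g) (hsupp : HasCompactSupport g) {k : ℕ → ℕ} {z : ℕ → ℝ × ℝ} {w : ℝ × ℝ}
    (hk : Tendsto k atTop atTop)
    (hz : Tendsto (fun n => (√(k n))⁻¹ • (z n - (k n : ℝ) • ∫ p, p ∂Q)) atTop (𝓝 w)) :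
    Tendsto (fun n => (k n : ℂ) * walkFourier Q g (k n) (z n)) atTop
      (𝓝 (g 0 * planeFourier (fun t => Complex.exp (-(Var[dot t; Q] : ℂ) / 2)) w)) := by
  obtain ⟨bound, hint, hbound⟩ :=
    exists_norm_walkFourierIntegrand_smul_le hQ hnonlattice hg hsupp
  have hne := hk.eventually_ne_atTop 0
  rw [planeFourier, ← integral_const_mul]
  refine (tendsto_integral_filter_of_dominated_convergence bound (.of_forall fun n => ?_)
    (hne.mono fun n hn => ae_of_all _ (hbound (k n) hn (z n))) hint
    (ae_of_all _ (tendsto_walkFourierIntegrand_smul hQ hg hk hz))).congr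
    fun n => (natCast_mul_walkFourier (k n) (z n)).symm
  exact ((continuous_walkFourierIntegrand hg _ _).comp
    (continuous_const_smul _)).aestronglyMeasurable

end LocalLimit

/-! ### Uniform bounds for the smoothed renewal sum -/

section PlaneKernel

/-- The strictly positive smoothing kernel of the plane: a product of two `fejerPair`s. -/
noncomputable def planeKernel (z : ℝ × ℝ) : ℝ := fejerPair z.1 * fejerPair z.2

/-- The compactly supported Fourier transform of `planeKernel`. -/
noncomputable def planeSymbol (t : ℝ × ℝ) : ℂ := modulatedTent t.1 * modulatedTent t.2

lemma continuous_planeKernel : Continuous planeKernel :=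
  (continuous_fejerPair.comp continuous_fst).mul (continuous_fejerPair.comp continuous_snd)

@[fun_prop]
lemma measurable_planeKernel : Measurable planeKernel := continuous_planeKernel.measurable

lemma planeKernel_pos (z : ℝ × ℝ) : 0 < planeKernel z := mul_pos (fejerPair_pos _) (fejerPair_pos _)

lemma planeKernel_mul_le (z : ℝ × ℝ) : planeKernel z * (1 + ‖z‖ ^ 2) ≤ 10000 := by
  have hnorm : ‖z‖ ^ 2 ≤ z.1 ^ 2 + z.2 ^ 2 := by
    rcases max_choice ‖z.1‖ ‖z.2‖ with h | h <;>
      rw [Prod.norm_def, h, Real.norm_eq_abs, sq_abs] <;> nlinarith [sq_nonneg z.1, sq_nonneg z.2]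
  calc planeKernel z * (1 + ‖z‖ ^ 2)
      ≤ planeKernel z * ((1 + z.1 ^ 2) * (1 + z.2 ^ 2)) := by
        gcongr
        · exact (planeKernel_pos z).le
        · nlinarith [mul_nonneg (sq_nonneg z.1) (sq_nonneg z.2)]
    _ = (fejerPair z.1 * (1 + z.1 ^ 2)) * (fejerPair z.2 * (1 + z.2 ^ 2)) := by
        rw [planeKernel]
        ring
    _ ≤ 100 * 100 := by
        gcongr
        · exact mul_nonneg (fejerPair_nonneg _) (by positivity)
        · exact fejerPair_mul_le _
        · exact fejerPair_mul_le _
    _ = 10000 := by norm_num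

lemma planeKernel_le (z : ℝ × ℝ) : planeKernel z ≤ 10000 :=
  (le_mul_of_one_le_right (planeKernel_pos z).le (by nlinarith [sq_nonneg ‖z‖])).trans
    (planeKernel_mul_le z)

lemma enorm_sq_mul_planeKernel_le (L : StrongDual ℝ (ℝ × ℝ)) (w : ℝ × ℝ) :
    ‖L w‖ₑ ^ 2 * ENNReal.ofReal (planeKernel w) ≤ ENNReal.ofReal (‖L‖ ^ 2 * 10000) := by
  rw [← ofReal_norm, ← ENNReal.ofReal_pow (norm_nonneg _), ← ENNReal.ofReal_mul (by positivity)]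
  refine ENNReal.ofReal_le_ofReal ?_
  calc ‖L w‖ ^ 2 * planeKernel w ≤ (‖L‖ * ‖w‖) ^ 2 * planeKernel w := by
        gcongr
        · exact (planeKernel_pos w).le
        · exact L.le_opNorm w
    _ = ‖L‖ ^ 2 * (planeKernel w * ‖w‖ ^ 2) := by ring
    _ ≤ ‖L‖ ^ 2 * 10000 := by
        gcongr
        linarith [planeKernel_mul_le w, planeKernel_pos w]

lemma integrable_planeKernel : Integrable planeKernel :=
  integrable_fejerPair.mul_prod integrable_fejerPair

lemma continuous_planeSymbol : Continuous planeSymbol :=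
  (continuous_modulatedTent.comp continuous_fst).mul (continuous_modulatedTent.comp continuous_snd)

lemma hasCompactSupport_planeSymbol : HasCompactSupport planeSymbol := by
  refine .intro (hasCompactSupport_modulatedTent.isCompact.prod
    hasCompactSupport_modulatedTent.isCompact) fun t ht => ?_
  rw [mem_prod, not_and_or] at ht
  rcases ht with h | h <;> simp [planeSymbol, image_eq_zero_of_notMem_tsupport h]

lemma planeFourier_mul (g h : ℝ → ℂ) (z : ℝ × ℝ) :
    planeFourier (fun t => g t.1 * h t.2) z =
      (∫ t : ℝ, g t * Complex.exp (z.1 * t * Complex.I)) *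
        ∫ t : ℝ, h t * Complex.exp (z.2 * t * Complex.I) := by
  rw [← integral_prod_mul, ← Measure.volume_eq_prod]
  refine integral_congr_ae (ae_of_all _ fun t => ?_)
  simp only [dot_apply]
  rw [mul_mul_mul_comm, ← Complex.exp_add]
  push_cast
  ring_nf

lemma planeFourier_comp_sub (g : ℝ × ℝ → ℂ) (θ z : ℝ × ℝ) :
    planeFourier (fun t => g (t - θ)) z =
      planeFourier g z * Complex.exp (dot θ z * Complex.I) := by
  rw [planeFourier, planeFourier, ← integral_mul_const, ← integral_add_right_eq_self _ θ]
  refine integral_congr_ae (ae_of_all _ fun t => ?_)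
  simp only [add_sub_cancel_right, map_add, add_apply, mul_assoc, ← Complex.exp_add]
  push_cast
  ring_nf

lemma planeFourier_planeSymbol (z : ℝ × ℝ) : planeFourier planeSymbol z = planeKernel z := by
  rw [show planeSymbol = fun t => modulatedTent t.1 * modulatedTent t.2 from rfl, planeFourier_mul,
    integral_modulatedTent_mul_exp, integral_modulatedTent_mul_exp, planeKernel, Complex.ofReal_mul]

lemma planeFourier_planeKernel (θ : ℝ × ℝ) :
    planeFourier (fun z => planeKernel z) θ = (2 * π) ^ 2 * planeSymbol (-θ) := by
  simp only [planeKernel, Complex.ofReal_mul]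
  rw [planeFourier_mul (fun s => fejerPair s) (fun s => fejerPair s), integral_fejerPair_mul_exp,
    integral_fejerPair_mul_exp, planeSymbol]
  simp only [Prod.fst_neg, Prod.snd_neg]
  ring

end PlaneKernel

section SmoothedWalk

open ProbabilityTheory

/-- The expectation of `planeKernel (z - ·)` after `k` steps of the random walk with step
law `Q`. -/
noncomputable def smoothedLaw (Q : Measure (ℝ × ℝ)) (k : ℕ) (z : ℝ × ℝ) : ℝ :=
  ∫ p, planeKernel (z - p) ∂(iterConv Q k)

lemma smoothedLaw_nonneg (Q : Measure (ℝ × ℝ)) (k : ℕ) (z : ℝ × ℝ) : 0 ≤ smoothedLaw Q k z :=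
  integral_nonneg fun _ => (planeKernel_pos _).le

lemma integrable_planeKernel_sub {P : Measure (ℝ × ℝ)} [IsFiniteMeasure P] (z : ℝ × ℝ) :
    Integrable (fun p => planeKernel (z - p)) P :=
  .of_bound (continuous_planeKernel.comp (continuous_const.sub continuous_id)).aestronglyMeasurable
    10000 (ae_of_all _ fun p => by
      rw [Real.norm_of_nonneg (planeKernel_pos _).le]
      exact planeKernel_le _)

lemma enorm_add_sq_le {E : Type*} [SeminormedAddGroup E] (x y : E) :
    ‖x + y‖ₑ ^ 2 ≤ 2 * (‖x‖ₑ ^ 2 + ‖y‖ₑ ^ 2) := by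
  have hnn : ‖x + y‖₊ ^ 2 ≤ 2 * (‖x‖₊ ^ 2 + ‖y‖₊ ^ 2) :=
    (pow_le_pow_left₀ zero_le (nnnorm_add_le x y) 2).trans add_sq_le
  simp only [enorm_eq_nnnorm]
  exact_mod_cast hnn

lemma ofReal_mul_ofReal_div_le {v C x y : ℝ} (hv : 0 ≤ v) (hC : 0 ≤ C) (hx : 0 ≤ x) (hy : 0 < y)
    (hxy : x ≤ y) : ENNReal.ofReal (x * v) * ENNReal.ofReal (C / y) ≤ ENNReal.ofReal (C * v) := by
  rw [← ENNReal.ofReal_mul (by positivity)]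
  refine ENNReal.ofReal_le_ofReal ?_
  rw [mul_div_assoc', div_le_iff₀ hy]
  nlinarith [mul_le_mul_of_nonneg_left hxy (mul_nonneg hC hv)]

lemma lintegral_conv_sub_sq_mul_le {E : Type*} [NormedAddCommGroup E] [NormedSpace ℝ E]
    [MeasurableSpace E] [BorelSpace E] [SecondCountableTopology E] {μ ν : Measure E} [SFinite μ]
    [SFinite ν] (L : StrongDual ℝ E) (a b : ℝ) {f : E → ℝ≥0∞} (hf : Measurable f) {A B : ℝ≥0∞}
    (hA : ∀ w, ∫⁻ p, f (w - p) ∂μ ≤ A) (hB : ∀ w, ∫⁻ q, f (w - q) ∂ν ≤ B) (z : E) :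
    ∫⁻ p, ‖L p - (a + b)‖ₑ ^ 2 * f (z - p) ∂(μ.conv ν) ≤
      2 * ((∫⁻ p, ‖L p - a‖ₑ ^ 2 ∂μ) * B + (∫⁻ q, ‖L q - b‖ₑ ^ 2 ∂ν) * A) := by
  have hfirst : ∫⁻ p, ∫⁻ q, ‖L p - a‖ₑ ^ 2 * f (z - p - q) ∂ν ∂μ ≤
      (∫⁻ p, ‖L p - a‖ₑ ^ 2 ∂μ) * B := by
    rw [← lintegral_mul_const _ (by fun_prop)]
    refine lintegral_mono fun p => ?_
    rw [lintegral_const_mul _ (by fun_prop)]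
    gcongr
    exact hB _
  have hsecond : ∫⁻ p, ∫⁻ q, ‖L q - b‖ₑ ^ 2 * f (z - p - q) ∂ν ∂μ ≤
      (∫⁻ q, ‖L q - b‖ₑ ^ 2 ∂ν) * A := by
    rw [lintegral_lintegral_swap (by fun_prop), ← lintegral_mul_const _ (by fun_prop)]
    refine lintegral_mono fun q => ?_
    simp only [sub_right_comm z]
    rw [lintegral_const_mul _ (by fun_prop)]
    gcongr
    exact hA _
  calc ∫⁻ p, ‖L p - (a + b)‖ₑ ^ 2 * f (z - p) ∂(μ.conv ν)
      = ∫⁻ p, ∫⁻ q, ‖(L p - a) + (L q - b)‖ₑ ^ 2 * f (z - p - q) ∂ν ∂μ := by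
        rw [Measure.lintegral_conv (by fun_prop)]
        simp only [map_add, add_sub_add_comm, sub_sub]
    _ ≤ ∫⁻ p, ∫⁻ q, 2 * (‖L p - a‖ₑ ^ 2 * f (z - p - q) +
          ‖L q - b‖ₑ ^ 2 * f (z - p - q)) ∂ν ∂μ := by
        refine lintegral_mono fun p => lintegral_mono fun q => ?_
        rw [← add_mul, ← mul_assoc]
        exact mul_le_mul_left (enorm_add_sq_le _ _) _
    _ = 2 * (∫⁻ p, ∫⁻ q, ‖L p - a‖ₑ ^ 2 * f (z - p - q) ∂ν ∂μ +
          ∫⁻ p, ∫⁻ q, ‖L q - b‖ₑ ^ 2 * f (z - p - q) ∂ν ∂μ) := by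
        rw [← lintegral_add_left (by fun_prop), ← lintegral_const_mul _ (by fun_prop)]
        refine lintegral_congr fun p => ?_
        rw [lintegral_const_mul _ (by fun_prop), lintegral_add_left (by fun_prop)]
    _ ≤ 2 * ((∫⁻ p, ‖L p - a‖ₑ ^ 2 ∂μ) * B + (∫⁻ q, ‖L q - b‖ₑ ^ 2 ∂ν) * A) := by gcongr

variable {Q : Measure (ℝ × ℝ)} [IsProbabilityMeasure Q]

lemma lintegral_planeKernel_sub (k : ℕ) (z : ℝ × ℝ) :
    ∫⁻ p, ENNReal.ofReal (planeKernel (z - p)) ∂(iterConv Q k) =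
      ENNReal.ofReal (smoothedLaw Q k z) :=
  (ofReal_integral_eq_lintegral_ofReal (integrable_planeKernel_sub z)
    (ae_of_all _ fun _ => (planeKernel_pos _).le)).symm

lemma walkFourier_planeSymbol_sub (θ : ℝ × ℝ) (k : ℕ) (z : ℝ × ℝ) :
    walkFourier Q (fun t => planeSymbol (t - θ)) k z =
      ∫ p, (planeKernel (z - p) : ℂ) * Complex.exp (dot θ (z - p) * Complex.I) ∂(iterConv Q k) := by
  have hint : Integrable planeSymbol :=
    continuous_planeSymbol.integrable_of_hasCompactSupport hasCompactSupport_planeSymbol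
  rw [walkFourier_eq_integral (hint.comp_sub_right θ)]
  simp only [planeFourier_comp_sub, planeFourier_planeSymbol]

lemma walkFourier_planeSymbol (k : ℕ) (z : ℝ × ℝ) :
    walkFourier Q planeSymbol k z = smoothedLaw Q k z := by
  simpa [smoothedLaw, integral_complex_ofReal] using walkFourier_planeSymbol_sub (Q := Q) 0 k z

lemma norm_walkFourier_planeSymbol_sub_le (θ : ℝ × ℝ) (k : ℕ) (z : ℝ × ℝ) :
    ‖walkFourier Q (fun t => planeSymbol (t - θ)) k z‖ ≤ smoothedLaw Q k z := by
  rw [walkFourier_planeSymbol_sub]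
  refine norm_integral_le_of_norm_le (integrable_planeKernel_sub z) (ae_of_all _ fun p => ?_)
  rw [norm_mul, Complex.norm_exp_ofReal_mul_I, mul_one,
    Complex.norm_of_nonneg (planeKernel_pos _).le]

lemma smoothedLaw_le (k : ℕ) (z : ℝ × ℝ) : smoothedLaw Q k z ≤ 10000 :=
  (integral_mono (integrable_planeKernel_sub z) (integrable_const _)
    fun _ => planeKernel_le _).trans_eq (by simp)

variable (hQ : MemLp id 2 Q) (hnonlattice : Nonlattice Q)
include hQ hnonlattice

lemma exists_smoothedLaw_le_div :
    ∃ C ≥ 0, ∀ (k : ℕ) (z : ℝ × ℝ), smoothedLaw Q k z ≤ C / (k + 1) := by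
  obtain ⟨C, hC⟩ := exists_natCast_mul_norm_walkFourier_le hQ hnonlattice continuous_planeSymbol
    hasCompactSupport_planeSymbol
  have hbound (k : ℕ) (z : ℝ × ℝ) : (k + 1) * smoothedLaw Q k z ≤ C + 10000 := by
    have := hC k z
    rw [walkFourier_planeSymbol, Complex.norm_of_nonneg (smoothedLaw_nonneg _ _ _)] at this
    linarith [smoothedLaw_le (Q := Q) k z]
  refine ⟨C + 10000, (mul_nonneg (by positivity) (smoothedLaw_nonneg Q 0 0)).trans (hbound 0 0),
    fun k z => ?_⟩
  rw [le_div_iff₀' (by positivity)]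
  exact hbound k z

-- Splitting the walk into two halves, each factor `k` lost to the variance of one half is
-- recovered from the decay `O(1 / k)` of the smoothed law of the other half.
lemma exists_lintegral_sub_sq_mul_planeKernel_le (L : StrongDual ℝ (ℝ × ℝ)) :
    ∃ C ≥ 0, ∀ (k : ℕ) (z : ℝ × ℝ),
      ∫⁻ p, ‖L p - k * ∫ q, L q ∂Q‖ₑ ^ 2 * ENNReal.ofReal (planeKernel (z - p)) ∂(iterConv Q k) ≤
        ENNReal.ofReal C := by
  obtain ⟨C, hC, hdecay⟩ := exists_smoothedLaw_le_div hQ hnonlattice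
  have hL : MemLp L 2 Q := L.comp_memLp' hQ
  have hvar := variance_nonneg L Q
  refine ⟨4 * (C * Var[L; Q]), by positivity, fun k z => ?_⟩
  obtain ⟨a, b, rfl, hab, hba⟩ : ∃ a b, k = a + b ∧ a ≤ b + 1 ∧ b ≤ a + 1 :=
    ⟨k / 2, k - k / 2, by omega, by omega, by omega⟩
  have hlaw (n : ℕ) (w : ℝ × ℝ) :
      ∫⁻ p, ENNReal.ofReal (planeKernel (w - p)) ∂(iterConv Q n) ≤
        ENNReal.ofReal (C / (n + 1)) := by
    rw [lintegral_planeKernel_sub]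
    exact ENNReal.ofReal_le_ofReal (hdecay n w)
  have hmoment (n : ℕ) : ∫⁻ p, ‖L p - n * ∫ q, L q ∂Q‖ₑ ^ 2 ∂(iterConv Q n) =
      ENNReal.ofReal (n * Var[L; Q]) := by
    rw [← integral_iterConv hL n, ← variance_iterConv hL n,
      (memLp_iterConv hL n).ofReal_variance_eq, evariance]
  have hsplit := lintegral_conv_sub_sq_mul_le L (a * ∫ q, L q ∂Q) (b * ∫ q, L q ∂Q)
    measurable_planeKernel.ennreal_ofReal (hlaw a) (hlaw b) z
  rw [hmoment, hmoment, ← add_mul, ← Nat.cast_add, ← mconv_eq_conv, ← iterConv_add] at hsplit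
  refine hsplit.trans ?_
  calc 2 * (ENNReal.ofReal (a * Var[L; Q]) * ENNReal.ofReal (C / (b + 1)) +
        ENNReal.ofReal (b * Var[L; Q]) * ENNReal.ofReal (C / (a + 1)))
      ≤ 2 * (ENNReal.ofReal (C * Var[L; Q]) + ENNReal.ofReal (C * Var[L; Q])) := by
        gcongr
        · exact ofReal_mul_ofReal_div_le hvar hC a.cast_nonneg (by positivity)
            (by exact_mod_cast hab)
        · exact ofReal_mul_ofReal_div_le hvar hC b.cast_nonneg (by positivity)
            (by exact_mod_cast hba)
    _ = ENNReal.ofReal (4 * (C * Var[L; Q])) := by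
        rw [← two_mul, ← mul_assoc, ENNReal.ofReal_mul four_pos.le, ENNReal.ofReal_ofNat]
        congr 1
        norm_num

lemma exists_sq_mul_smoothedLaw_le (L : StrongDual ℝ (ℝ × ℝ)) :
    ∃ C : ℝ, ∀ (k : ℕ) (z : ℝ × ℝ), L (z - (k : ℝ) • ∫ p, p ∂Q) ^ 2 * smoothedLaw Q k z ≤ C := by
  obtain ⟨C, hC, hbound⟩ := exists_lintegral_sub_sq_mul_planeKernel_le hQ hnonlattice L
  refine ⟨2 * (‖L‖ ^ 2 * 10000 + C), fun k z => ?_⟩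
  have hmean : ∫ p, L p ∂Q = L (∫ p, p ∂Q) := L.integral_comp_comm (hQ.integrable one_le_two)
  refine (ENNReal.ofReal_le_ofReal_iff (by positivity)).1 ?_
  calc ENNReal.ofReal (L (z - (k : ℝ) • ∫ p, p ∂Q) ^ 2 * smoothedLaw Q k z)
      = ∫⁻ p, ‖L (z - p) + (L p - k * ∫ q, L q ∂Q)‖ₑ ^ 2 *
          ENNReal.ofReal (planeKernel (z - p)) ∂(iterConv Q k) := by
        simp only [map_sub, sub_add_sub_cancel, map_smul, smul_eq_mul, hmean]
        rw [lintegral_const_mul _ (by fun_prop), lintegral_planeKernel_sub, ← ofReal_norm,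
          ← ENNReal.ofReal_pow (norm_nonneg _), Real.norm_eq_abs, sq_abs,
          ENNReal.ofReal_mul (sq_nonneg _)]
    _ ≤ ∫⁻ p, 2 * (ENNReal.ofReal (‖L‖ ^ 2 * 10000) + ‖L p - k * ∫ q, L q ∂Q‖ₑ ^ 2 *
          ENNReal.ofReal (planeKernel (z - p))) ∂(iterConv Q k) := by
        refine lintegral_mono fun p => ?_
        refine (mul_le_mul_left (enorm_add_sq_le _ _) _).trans ?_
        rw [mul_assoc, add_mul]
        gcongr
        exact enorm_sq_mul_planeKernel_le L _
    _ ≤ 2 * (ENNReal.ofReal (‖L‖ ^ 2 * 10000) + ENNReal.ofReal C) := by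
        rw [lintegral_const_mul _ (by fun_prop), lintegral_add_left measurable_const,
          lintegral_const, measure_univ, mul_one]
        gcongr
        exact hbound k z
    _ = ENNReal.ofReal (2 * (‖L‖ ^ 2 * 10000 + C)) := by
        rw [ENNReal.ofReal_mul two_pos.le, ENNReal.ofReal_add (by positivity) hC,
          ENNReal.ofReal_ofNat]

lemma exists_norm_sq_mul_smoothedLaw_le :
    ∃ C : ℝ, ∀ (k : ℕ) (z : ℝ × ℝ), ‖z - (k : ℝ) • ∫ p, p ∂Q‖ ^ 2 * smoothedLaw Q k z ≤ C := by
  obtain ⟨C₁, hC₁⟩ := exists_sq_mul_smoothedLaw_le hQ hnonlattice (.fst ℝ ℝ ℝ)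
  obtain ⟨C₂, hC₂⟩ := exists_sq_mul_smoothedLaw_le hQ hnonlattice (.snd ℝ ℝ ℝ)
  refine ⟨max C₁ C₂, fun k z => ?_⟩
  rcases max_choice ‖(z - (k : ℝ) • ∫ p, p ∂Q).1‖ ‖(z - (k : ℝ) • ∫ p, p ∂Q).2‖ with h | h <;>
    rw [Prod.norm_def, h, Real.norm_eq_abs, sq_abs]
  · exact (hC₁ k z).trans (le_max_left _ _)
  · exact (hC₂ k z).trans (le_max_right _ _)

end SmoothedWalk

/-! ### The limit of the smoothed renewal sum -/

section NatFloor

lemma map_natFloor_restrict_Ici :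
    (volume.restrict (Ici (0 : ℝ))).map (fun s => ⌊s⌋₊) = Measure.count := by
  refine Measure.ext_of_singleton fun n => ?_
  have hpreimage : (fun s : ℝ => ⌊s⌋₊) ⁻¹' {n} ∩ Ici 0 = Ico (n : ℝ) (n + 1) := by
    ext s
    refine ⟨fun ⟨hn, hs⟩ => (Nat.floor_eq_iff hs).1 hn, fun h => ?_⟩
    have hs : 0 ≤ s := n.cast_nonneg.trans h.1
    exact ⟨(Nat.floor_eq_iff hs).2 h, hs⟩
  rw [Measure.map_apply Nat.measurable_floor (measurableSet_singleton n),
    Measure.restrict_apply (Nat.measurable_floor (measurableSet_singleton n)), hpreimage]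
  simp

variable {E : Type*} [NormedAddCommGroup E] [NormedSpace ℝ E]

lemma integral_natFloor [CompleteSpace E] {a : ℕ → E} (ha : Summable fun k => ‖a k‖) :
    ∫ s in Ici (0 : ℝ), a ⌊s⌋₊ = ∑' k, a k := by
  have hmap := integral_map (μ := volume.restrict (Ici (0 : ℝ))) (f := a)
    Nat.measurable_floor.aemeasurable (StronglyMeasurable.of_discrete).aestronglyMeasurable
  rw [← hmap, map_natFloor_restrict_Ici, integral_countable (integrable_count_iff.2 ha)]
  simp

/-- The sequence `N • a k` as a step function of `u = (s - N) / √N`, the coordinate on the scale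
`√N` around the time `s = N`, where `k = ⌊s⌋`. -/
noncomputable def rescaledTerm (a : ℕ → E) (N u : ℝ) : E :=
  (Ici (0 : ℝ)).indicator (fun s => N • a ⌊s⌋₊) (N + u * √N)

lemma stronglyMeasurable_rescaledTerm (a : ℕ → E) (N : ℝ) :
    StronglyMeasurable (rescaledTerm a N) :=
  ((StronglyMeasurable.of_discrete.comp_measurable Nat.measurable_floor).const_smul N
    |>.indicator measurableSet_Ici).comp_measurable (by fun_prop)

lemma sqrt_smul_tsum_eq_integral [CompleteSpace E] {a : ℕ → E} (ha : Summable fun k => ‖a k‖)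
    {N : ℝ} (hN : 0 < N) : √N • ∑' k, a k = ∫ u, rescaledTerm a N u := by
  have hscale := Measure.integral_comp_mul_right
    (fun s : ℝ => (Ici (0 : ℝ)).indicator (fun s => N • a ⌊s⌋₊) (N + s)) √N
  simp only [rescaledTerm]
  rw [hscale, integral_add_left_eq_self ((Ici (0 : ℝ)).indicator fun s => N • a ⌊s⌋₊),
    integral_indicator measurableSet_Ici, integral_smul, integral_natFloor ha, smul_smul,
    abs_of_pos (by positivity)]
  congr 1
  rw [inv_mul_eq_div, Real.div_sqrt]

lemma eventually_nonneg_add_mul_sqrt (u : ℝ) : ∀ᶠ N in atTop, 0 ≤ N + u * √N := by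
  filter_upwards [Real.tendsto_sqrt_atTop.eventually_ge_atTop (-u), eventually_ge_atTop 0]
    with N hu hN
  nlinarith [Real.sq_sqrt hN, Real.sqrt_nonneg N]

lemma tendsto_natFloor_add_mul_sqrt_sub_div (u : ℝ) :
    Tendsto (fun N : ℝ => ((⌊N + u * √N⌋₊ : ℝ) - N) / √N) atTop (𝓝 u) := by
  have hlower : Tendsto (fun N : ℝ => u - (√N)⁻¹) atTop (𝓝 u) := by
    simpa using tendsto_const_nhds.sub Real.tendsto_sqrt_atTop.inv_tendsto_atTop
  refine tendsto_of_tendsto_of_tendsto_of_le_of_le' hlower tendsto_const_nhds ?_ ?_ <;>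
    filter_upwards [eventually_nonneg_add_mul_sqrt u, eventually_gt_atTop 0] with N hu hN <;>
    have hsqrt := Real.sqrt_pos.2 hN
  · rw [le_div_iff₀ hsqrt, sub_mul, inv_mul_cancel₀ hsqrt.ne']
    linarith [Nat.lt_floor_add_one (N + u * √N)]
  · rw [div_le_iff₀ hsqrt]
    linarith [Nat.floor_le hu]

lemma tendsto_natFloor_add_mul_sqrt_div (u : ℝ) :
    Tendsto (fun N : ℝ => (⌊N + u * √N⌋₊ : ℝ) / N) atTop (𝓝 1) := by
  have hlim := ((tendsto_natFloor_add_mul_sqrt_sub_div u).mul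
    Real.tendsto_sqrt_atTop.inv_tendsto_atTop).const_add 1
  rw [mul_zero, add_zero] at hlim
  refine hlim.congr' ?_
  filter_upwards [eventually_gt_atTop 0] with N hN
  rw [Pi.inv_apply, ← div_eq_mul_inv, div_div, Real.mul_self_sqrt hN.le]
  field_simp
  ring

lemma tendsto_natFloor_add_mul_sqrt_atTop (u : ℝ) :
    Tendsto (fun N : ℝ => ⌊N + u * √N⌋₊) atTop atTop := by
  rw [← tendsto_natCast_atTop_iff (R := ℝ)]
  refine ((tendsto_natFloor_add_mul_sqrt_div u).pos_mul_atTop one_pos tendsto_id).congr' ?_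
  filter_upwards [eventually_ne_atTop 0] with N hN
  exact div_mul_cancel₀ _ hN

lemma tendsto_inv_sqrt_natFloor_smul {z : ℕ → E} {N : ℕ → ℝ} {m : E} (hN : Tendsto N atTop atTop)
    (hz : Tendsto (fun n => (√(N n))⁻¹ • (z n - N n • m)) atTop (𝓝 0)) (u : ℝ) :
    Tendsto (fun n => (√(⌊N n + u * √(N n)⌋₊ : ℝ))⁻¹ • (z n - (⌊N n + u * √(N n)⌋₊ : ℝ) • m))
      atTop (𝓝 (-(u • m))) := by
  have hratio : Tendsto (fun n => (√((⌊N n + u * √(N n)⌋₊ : ℝ) / N n))⁻¹) atTop (𝓝 1) := by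
    simpa using (((Real.continuous_sqrt.tendsto 1).comp
      (tendsto_natFloor_add_mul_sqrt_div u)).comp hN).inv₀ (by simp)
  have hlim := hratio.smul
    (hz.sub (((tendsto_natFloor_add_mul_sqrt_sub_div u).comp hN).smul_const m))
  rw [one_smul, zero_sub] at hlim
  refine hlim.congr' ?_
  filter_upwards [hN.eventually_gt_atTop 0] with n hn
  have hsqrt := (Real.sqrt_pos.2 hn).ne'
  rw [Real.sqrt_div (Nat.cast_nonneg _), inv_div, div_eq_mul_inv, mul_comm, mul_smul,
    Function.comp_apply, smul_sub, smul_smul, smul_smul, mul_inv_cancel₀ hsqrt,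
    mul_div_cancel₀ _ hsqrt]
  congr 1
  module

end NatFloor

section Domination

variable {E : Type*} [NormedAddCommGroup E] [NormedSpace ℝ E] {m z : E} {N s e C₁ C₂ : ℝ}

lemma mul_le_of_norm_sub_smul_sq_mul_le (hm : m ≠ 0) (hN : 1 ≤ N) (hNm : 4 ≤ √N * ‖m‖)
    (hz : ‖z - N • m‖ ≤ √N) (hs : 0 ≤ s) (he : 0 ≤ e) (h₁ : (s + 1) * e ≤ C₁)
    (h₂ : ‖z - s • m‖ ^ 2 * e ≤ C₂) : N * e ≤ 2 * C₁ + 16 * C₂ / ‖m‖ ^ 2 := by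
  have hm' : 0 < ‖m‖ := norm_pos_iff.2 hm
  have hC₁ : 0 ≤ C₁ := (by positivity : 0 ≤ (s + 1) * e).trans h₁
  have hC₂ : 0 ≤ C₂ := (by positivity : 0 ≤ ‖z - s • m‖ ^ 2 * e).trans h₂
  rcases le_total N (2 * (s + 1)) with hnear | hfar
  · calc N * e ≤ 2 * (s + 1) * e := by gcongr
      _ = 2 * ((s + 1) * e) := by ring
      _ ≤ 2 * C₁ := by gcongr
      _ ≤ 2 * C₁ + 16 * C₂ / ‖m‖ ^ 2 := le_add_of_nonneg_right (by positivity)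
  · have hdist : (N - s) * ‖m‖ ≤ ‖z - s • m‖ + ‖z - N • m‖ := by
      calc (N - s) * ‖m‖ = ‖(z - s • m) - (z - N • m)‖ := by
            rw [← Real.norm_of_nonneg (by linarith : 0 ≤ N - s), ← norm_smul]
            congr 1
            module
        _ ≤ ‖z - s • m‖ + ‖z - N • m‖ := norm_sub_le _ _
    have hsqrt : √N ≤ N * ‖m‖ / 4 := by
      nlinarith [Real.sq_sqrt (zero_le_one.trans hN), Real.sqrt_nonneg N]
    have hquarter : N * ‖m‖ / 4 ≤ ‖z - s • m‖ := by nlinarith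
    have hsq : N ≤ N ^ 2 := by nlinarith
    have hfinal : N * e ≤ 16 * C₂ / ‖m‖ ^ 2 := by
      rw [le_div_iff₀ (by positivity)]
      calc N * e * ‖m‖ ^ 2 ≤ N ^ 2 * e * ‖m‖ ^ 2 := by gcongr
        _ = 16 * ((N * ‖m‖ / 4) ^ 2 * e) := by ring
        _ ≤ 16 * (‖z - s • m‖ ^ 2 * e) := by gcongr
        _ ≤ 16 * C₂ := by gcongr
    linarith

lemma sq_mul_le_of_norm_sub_smul_sq_mul_le {u : ℝ} (hN : 1 ≤ N) (hz : ‖z - N • m‖ ≤ √N)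
    (hs : |N + u * √N - s| ≤ 1) (he : 0 ≤ e) (h₂ : ‖z - s • m‖ ^ 2 * e ≤ C₂) :
    u ^ 2 * (N * e) * ‖m‖ ^ 2 ≤ 3 * (C₂ + (1 + ‖m‖ ^ 2) * (N * e)) := by
  have hdist : |u| * √N * ‖m‖ ≤ √N + ‖z - s • m‖ + ‖m‖ := by
    calc |u| * √N * ‖m‖ = ‖(z - N • m) - (z - s • m) - (N + u * √N - s) • -m‖ := by
          rw [← abs_of_nonneg (Real.sqrt_nonneg N), ← abs_mul, ← Real.norm_eq_abs, ← norm_smul,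
            abs_of_nonneg (Real.sqrt_nonneg N)]
          congr 1
          module
      _ ≤ ‖z - N • m‖ + ‖z - s • m‖ + |N + u * √N - s| * ‖m‖ := by
          refine (norm_sub_le _ _).trans (add_le_add (norm_sub_le _ _) ?_)
          rw [norm_smul, norm_neg, Real.norm_eq_abs]
      _ ≤ √N + ‖z - s • m‖ + ‖m‖ := by
          gcongr
          exact mul_le_of_le_one_left (norm_nonneg _) hs
  calc u ^ 2 * (N * e) * ‖m‖ ^ 2 = (|u| * √N * ‖m‖) ^ 2 * e := by
        rw [mul_pow, mul_pow, sq_abs, Real.sq_sqrt (by linarith)]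
        ring
    _ ≤ (√N + ‖z - s • m‖ + ‖m‖) ^ 2 * e := by gcongr
    _ ≤ 3 * (‖z - s • m‖ ^ 2 + √N ^ 2 + ‖m‖ ^ 2) * e := by
        gcongr
        nlinarith [sq_nonneg (‖z - s • m‖ - √N), sq_nonneg (‖z - s • m‖ - ‖m‖),
          sq_nonneg (√N - ‖m‖)]
    _ = 3 * (‖z - s • m‖ ^ 2 * e + (N + ‖m‖ ^ 2) * e) := by
        rw [Real.sq_sqrt (by linarith)]
        ring
    _ ≤ 3 * (C₂ + (1 + ‖m‖ ^ 2) * (N * e)) := by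
        have hstep : (N + ‖m‖ ^ 2) * e ≤ (1 + ‖m‖ ^ 2) * (N * e) := by
          nlinarith [mul_nonneg (sq_nonneg ‖m‖) (mul_nonneg (sub_nonneg.2 hN) he)]
        linarith

end Domination

section RenewalSum

open ProbabilityTheory

variable {Q : Measure (ℝ × ℝ)} [IsProbabilityMeasure Q] (hQ : MemLp id 2 Q)
  (hnonlattice : Nonlattice Q)
include hQ hnonlattice

lemma tendsto_rescaledTerm_walkFourier {N : ℕ → ℝ} {z : ℕ → ℝ × ℝ} {g : ℝ × ℝ → ℂ}
    (hN : Tendsto N atTop atTop)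
    (hz : Tendsto (fun n => (√(N n))⁻¹ • (z n - N n • ∫ p, p ∂Q)) atTop (𝓝 0))
    (hg : Continuous g) (hsupp : HasCompactSupport g) (u : ℝ) :
    Tendsto (fun n => rescaledTerm (walkFourier Q g · (z n)) (N n) u) atTop
      (𝓝 (g 0 * planeFourier (fun t => Complex.exp (-(Var[dot t; Q] : ℂ) / 2))
        (-(u • ∫ p, p ∂Q)))) := by
  have hk := (tendsto_natFloor_add_mul_sqrt_atTop u).comp hN
  have hratio : Tendsto (fun n => (((⌊N n + u * √(N n)⌋₊ / N n : ℝ)) : ℂ)⁻¹) atTop (𝓝 1) := by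
    simpa using ((Complex.continuous_ofReal.tendsto 1).comp
      ((tendsto_natFloor_add_mul_sqrt_div u).comp hN)).inv₀ (by simp)
  have hlim := hratio.mul (tendsto_natCast_mul_walkFourier hQ hnonlattice hg hsupp hk
    (tendsto_inv_sqrt_natFloor_smul hN hz u))
  rw [one_mul] at hlim
  refine hlim.congr' ?_
  filter_upwards [hN.eventually (eventually_nonneg_add_mul_sqrt u), hk.eventually_ne_atTop 0]
    with n hu hne
  rw [Function.comp_apply] at hne ⊢
  rw [rescaledTerm, indicator_of_mem (mem_Ici.2 hu), Complex.real_smul, Complex.ofReal_div,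
    Complex.ofReal_natCast, inv_div, ← mul_assoc, div_mul_cancel₀ _ (Nat.cast_ne_zero.2 hne)]

variable (hmean : ∫ p, p ∂Q ≠ 0)
include hmean

lemma summable_smoothedLaw (z : ℝ × ℝ) : Summable fun k => smoothedLaw Q k z := by
  obtain ⟨C, hC⟩ := exists_norm_sq_mul_smoothedLaw_le hQ hnonlattice
  set m := ∫ p, p ∂Q
  have hm : 0 < ‖m‖ := norm_pos_iff.2 hmean
  have hbound (k : ℕ) : k ^ 2 * smoothedLaw Q k z ≤ 2 * (‖z‖ ^ 2 * 10000 + C) / ‖m‖ ^ 2 := by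
    have he := smoothedLaw_nonneg Q k z
    have htriangle : k * ‖m‖ ≤ ‖z‖ + ‖z - (k : ℝ) • m‖ := by
      simpa [norm_smul] using norm_le_norm_add_norm_sub z ((k : ℝ) • m)
    rw [le_div_iff₀ (by positivity)]
    calc k ^ 2 * smoothedLaw Q k z * ‖m‖ ^ 2 = (k * ‖m‖) ^ 2 * smoothedLaw Q k z := by ring
      _ ≤ (‖z‖ + ‖z - (k : ℝ) • m‖) ^ 2 * smoothedLaw Q k z := by gcongr
      _ ≤ 2 * (‖z‖ ^ 2 + ‖z - (k : ℝ) • m‖ ^ 2) * smoothedLaw Q k z := by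
          gcongr
          exact add_sq_le
      _ = 2 * (‖z‖ ^ 2 * smoothedLaw Q k z + ‖z - (k : ℝ) • m‖ ^ 2 * smoothedLaw Q k z) := by ring
      _ ≤ 2 * (‖z‖ ^ 2 * 10000 + C) := by
          gcongr
          · exact smoothedLaw_le k z
          · exact hC k z
  refine .of_norm_bounded_eventually_nat ((Real.summable_one_div_nat_pow.2 one_lt_two).mul_left
    (2 * (‖z‖ ^ 2 * 10000 + C) / ‖m‖ ^ 2)) ?_
  filter_upwards [eventually_gt_atTop 0] with k hk
  rw [Real.norm_of_nonneg (smoothedLaw_nonneg _ _ _), mul_one_div, le_div_iff₀' (by positivity)]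
  exact hbound k

lemma summable_norm_walkFourier_planeSymbol_sub (θ z : ℝ × ℝ) :
    Summable fun k => ‖walkFourier Q (fun t => planeSymbol (t - θ)) k z‖ :=
  .of_nonneg_of_le (fun _ => norm_nonneg _) (fun k => norm_walkFourier_planeSymbol_sub_le θ k z)
    (summable_smoothedLaw hQ hnonlattice hmean z)

lemma exists_mul_smoothedLaw_natFloor_le :
    ∃ D ≥ 0, ∀ᶠ N : ℝ in atTop, ∀ z : ℝ × ℝ, ‖z - N • ∫ p, p ∂Q‖ ≤ √N → ∀ u : ℝ,
      0 ≤ N + u * √N → N * smoothedLaw Q ⌊N + u * √N⌋₊ z ≤ D * (1 + u ^ 2)⁻¹ := by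
  obtain ⟨C₁, hC₁, h₁⟩ := exists_smoothedLaw_le_div hQ hnonlattice
  obtain ⟨C₂, h₂⟩ := exists_norm_sq_mul_smoothedLaw_le hQ hnonlattice
  set m := ∫ p, p ∂Q
  have hm : 0 < ‖m‖ := norm_pos_iff.2 hmean
  have hC₂ : 0 ≤ C₂ := (mul_nonneg (sq_nonneg _) (smoothedLaw_nonneg Q 0 0)).trans (h₂ 0 0)
  set A := 2 * C₁ + 16 * C₂ / ‖m‖ ^ 2
  refine ⟨A + 3 * (C₂ + (1 + ‖m‖ ^ 2) * A) / ‖m‖ ^ 2, by positivity, ?_⟩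
  filter_upwards [eventually_ge_atTop 1,
    (Real.tendsto_sqrt_atTop.atTop_mul_const hm).eventually_ge_atTop 4] with N hN hNm z hz u hu
  have he := smoothedLaw_nonneg Q ⌊N + u * √N⌋₊ z
  have hfloor : |N + u * √N - ⌊N + u * √N⌋₊| ≤ 1 := by
    rw [abs_of_nonneg (sub_nonneg.2 (Nat.floor_le hu))]
    linarith [Nat.lt_floor_add_one (N + u * √N)]
  have hA := mul_le_of_norm_sub_smul_sq_mul_le hmean hN hNm hz (Nat.cast_nonneg _) he
    ((le_div_iff₀' (by positivity)).1 (h₁ ⌊N + u * √N⌋₊ z)) (h₂ ⌊N + u * √N⌋₊ z)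
  have hsq := sq_mul_le_of_norm_sub_smul_sq_mul_le hN hz hfloor he (h₂ ⌊N + u * √N⌋₊ z)
  rw [← div_eq_mul_inv, le_div_iff₀ (by positivity), mul_add, mul_one, mul_comm _ (u ^ 2)]
  refine add_le_add hA ?_
  rw [le_div_iff₀ (by positivity)]
  exact hsq.trans (by gcongr)

variable {N : ℕ → ℝ} {z : ℕ → ℝ × ℝ} (hN : Tendsto N atTop atTop)
  (hz : Tendsto (fun n => (√(N n))⁻¹ • (z n - N n • ∫ p, p ∂Q)) atTop (𝓝 0))
include hN hz

lemma exists_norm_rescaledTerm_walkFourier_le (θ : ℝ × ℝ) :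
    ∃ D : ℝ, ∀ᶠ n in atTop, ∀ u : ℝ,
      ‖rescaledTerm (walkFourier Q (fun t => planeSymbol (t - θ)) · (z n)) (N n) u‖ ≤
        D * (1 + u ^ 2)⁻¹ := by
  obtain ⟨D, hD, hbound⟩ := exists_mul_smoothedLaw_natFloor_le hQ hnonlattice hmean
  refine ⟨D, ?_⟩
  filter_upwards [hN.eventually hbound, hN.eventually_gt_atTop 0,
    (tendsto_zero_iff_norm_tendsto_zero.1 hz).eventually_le_const one_pos] with n hn hNpos hzn u
  rw [norm_smul, norm_inv, Real.norm_of_nonneg (Real.sqrt_nonneg _),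
    inv_mul_le_iff₀ (Real.sqrt_pos.2 hNpos), mul_one] at hzn
  rw [rescaledTerm]
  by_cases hu : 0 ≤ N n + u * √(N n)
  · rw [indicator_of_mem (mem_Ici.2 hu), norm_smul, Real.norm_of_nonneg hNpos.le]
    exact (mul_le_mul_of_nonneg_left (norm_walkFourier_planeSymbol_sub_le θ _ _) hNpos.le).trans
      (hn _ hzn u hu)
  · rw [indicator_of_notMem (by rwa [mem_Ici]), norm_zero]
    positivity

lemma tendsto_sqrt_mul_tsum_walkFourier (θ : ℝ × ℝ) :
    Tendsto (fun n => (√(N n) : ℂ) * ∑' k, walkFourier Q (fun t => planeSymbol (t - θ)) k (z n))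
      atTop (𝓝 (planeSymbol (-θ) * ∫ u : ℝ,
        planeFourier (fun t => Complex.exp (-(Var[dot t; Q] : ℂ) / 2)) (-(u • ∫ p, p ∂Q)))) := by
  obtain ⟨D, hD⟩ := exists_norm_rescaledTerm_walkFourier_le hQ hnonlattice hmean hN hz θ
  have hcont : Continuous fun t => planeSymbol (t - θ) :=
    continuous_planeSymbol.comp (by fun_prop)
  have hsupp : HasCompactSupport fun t => planeSymbol (t - θ) :=
    hasCompactSupport_planeSymbol.comp_homeomorph (Homeomorph.subRight θ)
  have hmain := tendsto_integral_filter_of_dominated_convergence (fun u => D * (1 + u ^ 2)⁻¹)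
    (.of_forall fun n => (stronglyMeasurable_rescaledTerm _ _).aestronglyMeasurable)
    (hD.mono fun n hn => ae_of_all _ hn) (integrable_inv_one_add_sq.const_mul D)
    (ae_of_all _ (tendsto_rescaledTerm_walkFourier hQ hnonlattice hN hz hcont hsupp))
  simp only [zero_sub] at hmain
  rw [← integral_const_mul]
  refine hmain.congr' ?_
  filter_upwards [hN.eventually_gt_atTop 0] with n hn
  rw [← sqrt_smul_tsum_eq_integral
    (summable_norm_walkFourier_planeSymbol_sub hQ hnonlattice hmean θ (z n)) hn, Complex.real_smul]

end RenewalSum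

/-! ### Gaussian integrals in the plane -/

section Gaussian

/-- The quadratic form of the symmetric matrix with rows `(A, B)` and `(B, D)`. -/
def binaryForm (A B D : ℝ) (t : ℝ × ℝ) : ℝ := A * t.1 ^ 2 + 2 * B * (t.1 * t.2) + D * t.2 ^ 2

lemma integral_cexp_neg_mul_sq_add {a : ℝ} (ha : 0 < a) (c d : ℂ) :
    ∫ x : ℝ, Complex.exp (-(a : ℂ) / 2 * x ^ 2 + c * x + d) =
      (√(2 * π / a) : ℂ) * Complex.exp (d + c ^ 2 / (2 * a)) := by
  have ha' : (a : ℂ) ≠ 0 := Complex.ofReal_ne_zero.2 ha.ne'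
  have hre : (-(a : ℂ) / 2).re < 0 := by
    rw [← Complex.ofReal_neg, ← Complex.ofReal_ofNat, ← Complex.ofReal_div, Complex.ofReal_re]
    linarith
  have hbase : (π : ℂ) / -(-(a : ℂ) / 2) = ((2 * π / a : ℝ) : ℂ) := by
    push_cast
    field_simp
  rw [integral_cexp_quadratic hre, hbase, Real.sqrt_eq_rpow, Complex.ofReal_cpow (by positivity)]
  congr 2
  · norm_num
  · field_simp
    ring

variable {A B D : ℝ} (hA : 0 < A)
include hA

lemma integral_cexp_neg_binaryForm_fst (w : ℝ × ℝ) (y : ℝ) :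
    ∫ x : ℝ, Complex.exp (-(binaryForm A B D (x, y) : ℂ) / 2) *
        Complex.exp (dot (x, y) w * Complex.I) =
      (√(2 * π / A) : ℂ) * Complex.exp (-(((A * D - B ^ 2) / A : ℝ) : ℂ) / 2 * y ^ 2 +
        ((w.2 - B * w.1 / A : ℝ) * Complex.I) * y + ((-(w.1 ^ 2 / (2 * A)) : ℝ) : ℂ)) := by
  have hA' : (A : ℂ) ≠ 0 := Complex.ofReal_ne_zero.2 hA.ne'
  refine Eq.trans ?_ ((integral_cexp_neg_mul_sq_add hA (-B * y + w.1 * Complex.I)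
    (-D / 2 * y ^ 2 + y * w.2 * Complex.I)).trans ?_)
  · refine integral_congr_ae (ae_of_all _ fun x => ?_)
    simp only [binaryForm, dot_apply, ← Complex.exp_add]
    push_cast
    ring_nf
  · congr 2
    push_cast
    field_simp
    ring_nf
    simp only [Complex.I_sq]
    ring

variable (hdet : 0 < A * D - B ^ 2)
include hdet

lemma pos_of_det_pos : 0 < D :=
  pos_of_mul_pos_right (by nlinarith [sq_nonneg B]) hA.le

lemma exists_mul_norm_sq_le_binaryForm :
    ∃ c > 0, ∀ t : ℝ × ℝ, c * ‖t‖ ^ 2 ≤ binaryForm A B D t := by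
  have hD := pos_of_det_pos hA hdet
  refine ⟨(A * D - B ^ 2) / (A + D), by positivity, fun t => ?_⟩
  have hnorm : ‖t‖ ^ 2 ≤ t.1 ^ 2 + t.2 ^ 2 := by
    rcases max_choice ‖t.1‖ ‖t.2‖ with h | h <;>
      rw [Prod.norm_def, h, Real.norm_eq_abs, sq_abs] <;> nlinarith [sq_nonneg t.1, sq_nonneg t.2]
  rw [div_mul_eq_mul_div, div_le_iff₀ (by positivity)]
  calc (A * D - B ^ 2) * ‖t‖ ^ 2 ≤ (A * D - B ^ 2) * (t.1 ^ 2 + t.2 ^ 2) := by gcongr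
    _ ≤ (A * D - B ^ 2) * (t.1 ^ 2 + t.2 ^ 2) +
          ((A * t.1 + B * t.2) ^ 2 + (B * t.1 + D * t.2) ^ 2) :=
        le_add_of_nonneg_right (by positivity)
    _ = binaryForm A B D t * (A + D) := by
        rw [binaryForm]
        ring

lemma binaryForm_pos {t : ℝ × ℝ} (ht : t ≠ 0) : 0 < binaryForm A B D t := by
  obtain ⟨c, hc, hle⟩ := exists_mul_norm_sq_le_binaryForm hA hdet
  have := norm_pos_iff.2 ht
  exact (by positivity : 0 < c * ‖t‖ ^ 2).trans_le (hle t)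

lemma integrable_cexp_neg_binaryForm_mul (w : ℝ × ℝ) :
    Integrable fun t => Complex.exp (-(binaryForm A B D t : ℂ) / 2) *
      Complex.exp (dot t w * Complex.I) := by
  obtain ⟨c, hc, hle⟩ := exists_mul_norm_sq_le_binaryForm hA hdet
  refine (integrable_exp_neg_mul_norm_sq (half_pos hc)).mono'
    (Continuous.aestronglyMeasurable (by unfold binaryForm; fun_prop)) (ae_of_all _ fun t => ?_)
  rw [norm_mul, Complex.norm_exp_ofReal_mul_I, mul_one, Complex.norm_exp, ← Complex.ofReal_neg,
    ← Complex.ofReal_ofNat, ← Complex.ofReal_div, Complex.ofReal_re]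
  gcongr
  linarith [hle t]

lemma planeFourier_cexp_neg_binaryForm (w : ℝ × ℝ) :
    planeFourier (fun t => Complex.exp (-(binaryForm A B D t : ℂ) / 2)) w =
      (2 * π / √(A * D - B ^ 2) : ℝ) *
        Complex.exp (-(binaryForm D (-B) A w / (A * D - B ^ 2) : ℝ) / 2) := by
  have hA' : (A : ℂ) ≠ 0 := Complex.ofReal_ne_zero.2 hA.ne'
  have hdet' : (A * D - B ^ 2 : ℂ) ≠ 0 := by exact_mod_cast hdet.ne'
  have hint := integrable_cexp_neg_binaryForm_mul hA hdet w
  rw [Measure.volume_eq_prod] at hint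
  rw [planeFourier, Measure.volume_eq_prod, integral_prod_symm _ hint]
  simp only [integral_cexp_neg_binaryForm_fst hA]
  rw [integral_const_mul, integral_cexp_neg_mul_sq_add (div_pos hdet hA), ← mul_assoc,
    ← Complex.ofReal_mul, ← Real.sqrt_mul (by positivity)]
  congr 2
  · rw [← Real.sqrt_sq (by positivity : 0 ≤ 2 * π), ← Real.sqrt_div (by positivity),
      Real.sqrt_sq (by positivity)]
    congr 1
    field_simp
  · rw [mul_pow, Complex.I_sq, binaryForm]
    push_cast
    generalize hE : (A * D - B ^ 2 : ℂ) = E at *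
    field_simp
    rw [← hE]
    ring

lemma integral_planeFourier_cexp_neg_binaryForm {m : ℝ × ℝ} (hm : m ≠ 0) :
    ∫ u : ℝ, planeFourier (fun t => Complex.exp (-(binaryForm A B D t : ℂ) / 2)) (-(u • m)) =
      ((2 * π) ^ 2 / √(2 * π * binaryForm A B D (-m.2, m.1)) : ℝ) := by
  have hdual : 0 < binaryForm D (-B) A m :=
    binaryForm_pos (pos_of_det_pos hA hdet) (by linarith) hm
  have hrotate : binaryForm A B D (-m.2, m.1) = binaryForm D (-B) A m := by
    simp only [binaryForm]
    ring
  have hline (u : ℝ) :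
      Complex.exp (-(binaryForm D (-B) A (-(u • m)) / (A * D - B ^ 2) : ℝ) / 2) = Complex.exp
        (-((binaryForm D (-B) A m / (A * D - B ^ 2) : ℝ) : ℂ) / 2 * u ^ 2 + 0 * u + 0) := by
    simp only [binaryForm, Prod.fst_neg, Prod.snd_neg, Prod.smul_fst, Prod.smul_snd, smul_eq_mul]
    push_cast
    ring_nf
  simp only [planeFourier_cexp_neg_binaryForm hA hdet, hline]
  rw [integral_const_mul, integral_cexp_neg_mul_sq_add (div_pos hdual hdet), hrotate,
    zero_pow two_ne_zero, zero_div, add_zero, Complex.exp_zero, mul_one, ← Complex.ofReal_mul]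
  congr 1
  rw [div_mul_eq_mul_div, div_div_eq_mul_div, Real.sqrt_div (by positivity),
    Real.sqrt_mul Real.two_pi_pos.le, Real.sqrt_mul Real.two_pi_pos.le]
  have h₁ := Real.sqrt_pos.2 hdet
  have h₂ := Real.sqrt_pos.2 hdual
  have h₃ := Real.sqrt_pos.2 Real.two_pi_pos
  field_simp
  rw [Real.sq_sqrt Real.two_pi_pos.le]

end Gaussian

section NonlatticeVariance

open ProbabilityTheory

lemma Nonlattice.variance_pos {E : Type*} [NormedAddCommGroup E] [NormedSpace ℝ E]
    [MeasurableSpace E] {Q : Measure E} [IsProbabilityMeasure Q] (hnonlattice : Nonlattice Q)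
    {L : StrongDual ℝ E} (hL : MemLp L 2 Q) (hne : L ≠ 0) : 0 < Var[L; Q] := by
  refine (variance_nonneg _ _).lt_of_ne' fun hvar => hnonlattice L hne 0 Q[L] ?_
  filter_upwards [ae_eq_integral_of_variance_eq_zero hL hvar] with p hp
  exact ⟨0, by simpa using hp⟩

variable {Q : Measure (ℝ × ℝ)} [IsProbabilityMeasure Q]

lemma variance_dot (hQ : MemLp id 2 Q) (t : ℝ × ℝ) :
    Var[dot t; Q] = binaryForm Var[Prod.fst; Q] cov[Prod.fst, Prod.snd; Q] Var[Prod.snd; Q] t := by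
  have hfst : MemLp Prod.fst 2 Q := (ContinuousLinearMap.fst ℝ ℝ ℝ).comp_memLp' hQ
  have hsnd : MemLp Prod.snd 2 Q := (ContinuousLinearMap.snd ℝ ℝ ℝ).comp_memLp' hQ
  have hdot : (dot t : ℝ × ℝ → ℝ) = fun p => t.1 * p.1 + t.2 * p.2 := rfl
  rw [hdot, variance_fun_add (hfst.const_mul _) (hsnd.const_mul _), variance_const_mul,
    variance_const_mul, covariance_const_mul_left, covariance_const_mul_right, binaryForm]
  ring

lemma variance_dot_pos (hQ : MemLp id 2 Q) (hnonlattice : Nonlattice Q) {t : ℝ × ℝ}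
    (ht : t ≠ 0) : 0 < Var[dot t; Q] :=
  hnonlattice.variance_pos ((dot t).comp_memLp' hQ) <|
    norm_pos_iff.1 ((norm_pos_iff.2 ht).trans_le (norm_le_norm_dot t))

lemma integral_planeFourier_cexp_neg_variance (hQ : MemLp id 2 Q) (hnonlattice : Nonlattice Q)
    {m : ℝ × ℝ} (hm : m ≠ 0) :
    ∫ u : ℝ, planeFourier (fun t => Complex.exp (-(Var[dot t; Q] : ℂ) / 2)) (-(u • m)) =
      ((2 * π) ^ 2 / √(2 * π * Var[dot (-m.2, m.1); Q]) : ℝ) := by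
  set A := Var[Prod.fst; Q]
  set B := cov[Prod.fst, Prod.snd; Q]
  have hpos {t : ℝ × ℝ} (ht : t ≠ 0) : 0 < binaryForm A B Var[Prod.snd; Q] t := by
    rw [← variance_dot hQ]
    exact variance_dot_pos hQ hnonlattice ht
  have hA : 0 < A := by simpa [binaryForm] using hpos (t := (1, 0)) (by simp)
  have hdet : 0 < A * Var[Prod.snd; Q] - B ^ 2 := by
    have hAdet := hpos (t := (-B, A)) (by simp [hA.ne'])
    refine pos_of_mul_pos_right (a := A) (hAdet.trans_eq ?_) hA.le
    simp only [binaryForm]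
    ring
  simp only [variance_dot hQ]
  exact integral_planeFourier_cexp_neg_binaryForm hA hdet hm

end NonlatticeVariance

/-! ### Weak convergence of finite measures -/

section Portmanteau

variable {Ω : Type*} [TopologicalSpace Ω]

lemma frontier_setOf_le_subset {g : Ω → ℝ} {t : ℝ} :
    frontier {p | t ≤ g p} ⊆ {p | g p = t} ∪ {p | ¬ ContinuousAt g p} := by
  intro p hp
  refine or_iff_not_imp_right.2 fun hcont => ?_
  have hg : ContinuousAt g p := not_not.1 hcont
  refine le_antisymm (not_lt.1 fun hlt => hp.2 ?_) (not_lt.1 fun hlt => ?_)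
  · exact mem_interior_iff_mem_nhds.2 ((hg.eventually_const_lt hlt).mono fun q hq => hq.le)
  · obtain ⟨q, hq, hq'⟩ :=
      ((mem_closure_iff_frequently.1 hp.1).and_eventually (hg.eventually_lt_const hlt)).exists
    exact hq'.not_ge hq

variable [MeasurableSpace Ω] [OpensMeasurableSpace Ω] [HasOuterApproxClosed Ω]

lemma tendsto_lintegral_ofReal_probabilityMeasure {μ : ℕ → ProbabilityMeasure Ω}
    {μ₀ : ProbabilityMeasure Ω} (hμ : Tendsto μ atTop (𝓝 μ₀)) {g : Ω → ℝ} (hg : Measurable g)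
    {M : ℝ} (hg₀ : ∀ p, 0 ≤ g p) (hgM : ∀ p, g p ≤ M)
    (hcont : ∀ᵐ p ∂(μ₀ : Measure Ω), ContinuousAt g p) :
    Tendsto (fun n => ∫⁻ p, ENNReal.ofReal (g p) ∂(μ n : Measure Ω)) atTop
      (𝓝 (∫⁻ p, ENNReal.ofReal (g p) ∂(μ₀ : Measure Ω))) := by
  have hlayer (ρ : ProbabilityMeasure Ω) : ∫⁻ p, ENNReal.ofReal (g p) ∂(ρ : Measure Ω) =
      ∫⁻ t in Ioi (0 : ℝ), (ρ : Measure Ω) {p | t ≤ g p} :=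
    lintegral_eq_lintegral_meas_le _ (ae_of_all _ hg₀) hg.aemeasurable
  have hlevel : ∀ᵐ t : ℝ, (μ₀ : Measure Ω) {p | g p = t} = 0 := by
    have hcount : {t : ℝ | 0 < (μ₀ : Measure Ω) {p | g p = t}}.Countable :=
      Measure.countable_meas_level_set_pos hg
    filter_upwards [measure_eq_zero_iff_ae_notMem.1 (hcount.measure_zero volume)] with t ht
    exact nonpos_iff_eq_zero.1 (not_lt.1 ht)
  simp only [hlayer]
  refine tendsto_lintegral_of_dominated_convergence' ((Iic M).indicator fun _ => 1)
    (fun n => ?_) (fun n => ae_of_all _ fun t => ?_) ?_ ?_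
  · have hanti : Antitone fun t : ℝ => (μ n : Measure Ω) {p | t ≤ g p} :=
      fun s t hst => measure_mono fun p hp => le_trans hst hp
    exact hanti.measurable.aemeasurable
  · by_cases ht : t ≤ M
    · rw [indicator_of_mem (mem_Iic.2 ht)]
      exact prob_le_one
    · have hempty : {p | t ≤ g p} = ∅ :=
        eq_empty_of_forall_notMem fun p hp => ht (le_trans hp (hgM p))
      simp only [hempty, measure_empty, zero_le]
  · rw [lintegral_indicator measurableSet_Iic, Measure.restrict_restrict measurableSet_Iic,
      Iic_inter_Ioi]
    simp
  · filter_upwards [ae_restrict_of_ae hlevel] with t ht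
    exact ProbabilityMeasure.tendsto_measure_of_null_frontier_of_tendsto' hμ
      (measure_mono_null frontier_setOf_le_subset (measure_union_null ht hcont))

lemma tendsto_lintegral_ofReal_finiteMeasure {ν : ℕ → FiniteMeasure Ω} {ν₀ : FiniteMeasure Ω}
    (hν : Tendsto ν atTop (𝓝 ν₀)) (hne : ν₀ ≠ 0) {g : Ω → ℝ} (hg : Measurable g)
    {M : ℝ} (hg₀ : ∀ p, 0 ≤ g p) (hgM : ∀ p, g p ≤ M)
    (hcont : ∀ᵐ p ∂(ν₀ : Measure Ω), ContinuousAt g p) :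
    Tendsto (fun n => ∫⁻ p, ENNReal.ofReal (g p) ∂(ν n : Measure Ω)) atTop
      (𝓝 (∫⁻ p, ENNReal.ofReal (g p) ∂(ν₀ : Measure Ω))) := by
  have : Nonempty Ω := by
    by_contra hΩ
    rw [not_nonempty_iff] at hΩ
    exact hne (Subtype.ext (Measure.eq_zero_of_isEmpty _))
  have hnormalize (ρ : FiniteMeasure Ω) : ∫⁻ p, ENNReal.ofReal (g p) ∂(ρ : Measure Ω) =
      (ρ.mass : ℝ≥0∞) * ∫⁻ p, ENNReal.ofReal (g p) ∂(ρ.normalize : Measure Ω) := by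
    conv_lhs => rw [FiniteMeasure.self_eq_mass_smul_normalize ρ, FiniteMeasure.toMeasure_smul,
      lintegral_smul_measure]
    rfl
  simp only [hnormalize]
  refine ENNReal.Tendsto.mul (ENNReal.tendsto_coe.2 hν.mass) (Or.inr ?_)
    (tendsto_lintegral_ofReal_probabilityMeasure
      (FiniteMeasure.tendsto_normalize_of_tendsto hν hne) hg hg₀ hgM ?_) (Or.inr coe_ne_top)
  · refine ((lintegral_mono fun p => ENNReal.ofReal_le_ofReal (hgM p)).trans_lt ?_).ne
    simp
  · rw [FiniteMeasure.toMeasure_normalize_eq_of_nonzero ν₀ hne]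
    exact Measure.smul_absolutelyContinuous hcont

end Portmanteau

section Levy

variable {E : Type*} [NormedAddCommGroup E] [NormedSpace ℝ E] [FiniteDimensional ℝ E]
  [MeasurableSpace E] [BorelSpace E]

lemma tendsto_probabilityMeasure_of_tendsto_charFunDual {μ : ℕ → ProbabilityMeasure E}
    {μ₀ : ProbabilityMeasure E}
    (h : ∀ L, Tendsto (fun n => charFunDual (μ n : Measure E) L) atTop
      (𝓝 (charFunDual (μ₀ : Measure E) L))) :
    Tendsto μ atTop (𝓝 μ₀) := by
  let e := toEuclidean (E := E)
  have hmap : Tendsto (fun n => (μ n).map e.continuous.measurable.aemeasurable) atTop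
      (𝓝 (μ₀.map e.continuous.measurable.aemeasurable)) := by
    refine ProbabilityMeasure.tendsto_of_tendsto_charFun fun t => ?_
    have hcharFun (ρ : ProbabilityMeasure E) :
        charFun (ρ.map e.continuous.measurable.aemeasurable : Measure _) t =
          charFunDual (ρ : Measure E) (InnerProductSpace.toDualMap ℝ _ t ∘L (e : E →L[ℝ] _)) := by
      rw [charFun_eq_charFunDual_toDualMap, ProbabilityMeasure.toMeasure_map]
      exact charFunDual_map e.toContinuousLinearMap _
    simp only [hcharFun]
    exact h _
  have hback (ρ : ProbabilityMeasure E) : (ρ.map e.continuous.measurable.aemeasurable).map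
      e.symm.continuous.measurable.aemeasurable = ρ := by
    refine ProbabilityMeasure.toMeasure_injective ?_
    rw [ProbabilityMeasure.toMeasure_map, ProbabilityMeasure.toMeasure_map,
      Measure.map_map e.symm.continuous.measurable e.continuous.measurable, e.symm_comp_self,
      Measure.map_id]
  simpa only [hback] using
    ProbabilityMeasure.tendsto_map_of_tendsto_of_continuous _ _ hmap e.symm.continuous

lemma tendsto_finiteMeasure_of_tendsto_charFunDual {ν : ℕ → FiniteMeasure E}
    {ν₀ : FiniteMeasure E} (hne : ν₀ ≠ 0)
    (h : ∀ L, Tendsto (fun n => charFunDual (ν n : Measure E) L) atTop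
      (𝓝 (charFunDual (ν₀ : Measure E) L))) :
    Tendsto ν atTop (𝓝 ν₀) := by
  have hzero (ρ : FiniteMeasure E) : charFunDual (ρ : Measure E) 0 = ((ρ.mass : ℝ) : ℂ) := by
    simp only [charFunDual_apply, zero_apply, Complex.ofReal_zero, zero_mul, Complex.exp_zero,
      integral_const, Complex.real_smul, mul_one]
    rfl
  have hmass : Tendsto (fun n => (ν n).mass) atTop (𝓝 ν₀.mass) := by
    have hre := (Complex.continuous_re.tendsto _).comp (h 0)
    simp only [hzero, Complex.ofReal_re, Function.comp_def] at hre
    exact_mod_cast hre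
  have hmass₀ : ν₀.mass ≠ 0 := ν₀.mass_nonzero_iff.2 hne
  have hnormalize {ρ : FiniteMeasure E} (hρ : ρ ≠ 0) (L : StrongDual ℝ E) :
      charFunDual (ρ.normalize : Measure E) L =
        ((ρ.mass : ℝ) : ℂ)⁻¹ * charFunDual (ρ : Measure E) L := by
    rw [ρ.toMeasure_normalize_eq_of_nonzero hρ, charFunDual_apply, charFunDual_apply,
      integral_smul_nnreal_measure]
    simp [NNReal.smul_def]
  refine FiniteMeasure.tendsto_of_tendsto_normalize_testAgainstNN_of_tendsto_mass
    (tendsto_probabilityMeasure_of_tendsto_charFunDual fun L => ?_) hmass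
  have hinv : Tendsto (fun n => (((ν n).mass : ℝ) : ℂ)⁻¹) atTop (𝓝 ((ν₀.mass : ℝ) : ℂ)⁻¹) :=
    Tendsto.inv₀ (by simpa only [hzero] using h 0) (by exact_mod_cast hmass₀)
  rw [hnormalize hne]
  refine (hinv.mul (h L)).congr' ?_
  filter_upwards [hmass.eventually_ne hmass₀] with n hn
  rw [hnormalize ((ν n).mass_nonzero_iff.1 hn)]

end Levy

/-! ### The local renewal theorem -/

section LocalRenewal

open ProbabilityTheory

lemma charFunDual_withDensity_ofReal {E : Type*} [NormedAddCommGroup E] [NormedSpace ℝ E]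
    [MeasurableSpace E] {μ : Measure E} {f : E → ℝ} (hf : Measurable f) (hf₀ : ∀ p, 0 ≤ f p)
    (L : StrongDual ℝ E) :
    charFunDual (μ.withDensity fun p => ENNReal.ofReal (f p)) L =
      ∫ p, (f p : ℂ) * Complex.exp (L p * Complex.I) ∂μ := by
  rw [charFunDual_apply, integral_withDensity_eq_integral_toReal_smul (by fun_prop)
    (ae_of_all _ fun p => ENNReal.ofReal_lt_top)]
  simp only [ENNReal.toReal_ofReal (hf₀ _), Complex.real_smul]

lemma charFunDual_smul {E : Type*} [NormedAddCommGroup E] [NormedSpace ℝ E] [MeasurableSpace E]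
    (μ : Measure E) {c : ℝ} (hc : 0 ≤ c) (L : StrongDual ℝ E) :
    charFunDual (ENNReal.ofReal c • μ) L = c * charFunDual μ L := by
  rw [charFunDual_apply, integral_smul_measure, ENNReal.toReal_ofReal hc, Complex.real_smul,
    charFunDual_apply]

/-- The expected occupation measure of `z - S_k`, `k ≥ 0`, for the random walk `S` with step law
`Q`, weighted by the integrable density `planeKernel`, which makes it finite. -/
noncomputable def smoothedRenewal (Q : Measure (ℝ × ℝ)) (z : ℝ × ℝ) : Measure (ℝ × ℝ) :=
  Measure.sum fun k => ((iterConv Q k).map (z - ·)).withDensity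
    fun w => ENNReal.ofReal (planeKernel w)

lemma lintegral_smoothedRenewal (Q : Measure (ℝ × ℝ)) (z : ℝ × ℝ) {h : ℝ × ℝ → ℝ≥0∞}
    (hh : Measurable h) : ∫⁻ w, h w ∂(smoothedRenewal Q z) =
      ∑' k, ∫⁻ p, ENNReal.ofReal (planeKernel (z - p)) * h (z - p) ∂(iterConv Q k) := by
  rw [smoothedRenewal, lintegral_sum_measure]
  congr 1 with k
  rw [lintegral_withDensity_eq_lintegral_mul _ (by fun_prop) hh,
    lintegral_map (by fun_prop) (by fun_prop)]
  rfl

lemma lintegral_div_planeKernel_smoothedRenewal (Q : Measure (ℝ × ℝ)) (z : ℝ × ℝ)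
    {g : ℝ × ℝ → ℝ} (hg : Measurable g) :
    ∫⁻ w, ENNReal.ofReal (g w / planeKernel w) ∂(smoothedRenewal Q z) =
      ∑' k, ∫⁻ p, ENNReal.ofReal (g (z - p)) ∂(iterConv Q k) := by
  rw [lintegral_smoothedRenewal Q z (by fun_prop)]
  simp only [← ENNReal.ofReal_mul (planeKernel_pos _).le, mul_div_cancel₀ _ (planeKernel_pos _).ne']

lemma lintegral_div_planeKernel_withDensity {μ : Measure (ℝ × ℝ)} {g : ℝ × ℝ → ℝ}
    (hg : Measurable g) :
    ∫⁻ w, ENNReal.ofReal (g w / planeKernel w)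
        ∂(μ.withDensity fun w => ENNReal.ofReal (planeKernel w)) =
      ∫⁻ w, ENNReal.ofReal (g w) ∂μ := by
  rw [lintegral_withDensity_eq_lintegral_mul _ (by fun_prop) (by fun_prop)]
  simp only [Pi.mul_apply, ← ENNReal.ofReal_mul (planeKernel_pos _).le,
    mul_div_cancel₀ _ (planeKernel_pos _).ne']

instance isFiniteMeasure_withDensity_planeKernel :
    IsFiniteMeasure ((volume : Measure (ℝ × ℝ)).withDensity
      fun w => ENNReal.ofReal (planeKernel w)) :=
  isFiniteMeasure_withDensity_ofReal integrable_planeKernel.2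

lemma withDensity_planeKernel_ne_zero :
    (volume : Measure (ℝ × ℝ)).withDensity (fun w => ENNReal.ofReal (planeKernel w)) ≠ 0 := by
  rw [Ne, withDensity_eq_zero_iff (by fun_prop)]
  intro hzero
  obtain ⟨w, hw⟩ := hzero.exists
  exact (ENNReal.ofReal_pos.2 (planeKernel_pos w)).ne' hw

lemma charFunDual_withDensity_planeKernel (θ : ℝ × ℝ) :
    charFunDual ((volume : Measure (ℝ × ℝ)).withDensity fun w => ENNReal.ofReal (planeKernel w))
      (dot θ) = (2 * π) ^ 2 * planeSymbol (-θ) := by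
  rw [charFunDual_withDensity_ofReal (by fun_prop) fun _ => (planeKernel_pos _).le,
    ← planeFourier_planeKernel, planeFourier]
  simp only [dot_apply, mul_comm]

variable {Q : Measure (ℝ × ℝ)} [IsProbabilityMeasure Q] (hQ : MemLp id 2 Q)
  (hnonlattice : Nonlattice Q) (hmean : ∫ p, p ∂Q ≠ 0)
include hQ hnonlattice hmean

lemma isFiniteMeasure_smoothedRenewal (z : ℝ × ℝ) : IsFiniteMeasure (smoothedRenewal Q z) := by
  constructor
  rw [← lintegral_one, lintegral_smoothedRenewal _ _ measurable_const]
  simp only [mul_one, lintegral_planeKernel_sub]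
  rw [← ENNReal.ofReal_tsum_of_nonneg (fun k => smoothedLaw_nonneg Q k z)
    (summable_smoothedLaw hQ hnonlattice hmean z)]
  exact ENNReal.ofReal_lt_top

lemma charFunDual_smoothedRenewal (z θ : ℝ × ℝ) :
    charFunDual (smoothedRenewal Q z) (dot θ) =
      ∑' k, walkFourier Q (fun t => planeSymbol (t - θ)) k z := by
  have := isFiniteMeasure_smoothedRenewal hQ hnonlattice hmean z
  have hint : Integrable (fun p => Complex.exp (dot θ p * Complex.I)) (smoothedRenewal Q z) :=
    integrable_exp_mul_I (dot θ)
  rw [charFunDual_apply]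
  unfold smoothedRenewal at hint ⊢
  rw [integral_sum_measure hint]
  congr 1 with k
  rw [walkFourier_planeSymbol_sub, ← charFunDual_apply,
    charFunDual_withDensity_ofReal (by fun_prop) fun _ => (planeKernel_pos _).le,
    integral_map (by fun_prop) (by fun_prop)]

variable {N : ℕ → ℝ} (hN : Tendsto N atTop atTop) {z : ℕ → ℝ × ℝ}
  (hz : Tendsto (fun n => (√(N n))⁻¹ • (z n - N n • ∫ p, p ∂Q)) atTop (𝓝 0))
include hN hz

lemma tendsto_charFunDual_smoothedRenewal (L : StrongDual ℝ (ℝ × ℝ)) :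
    Tendsto (fun n => charFunDual (ENNReal.ofReal √(N n) • smoothedRenewal Q (z n)) L) atTop
      (𝓝 (charFunDual (ENNReal.ofReal
          (1 / √(2 * π * Var[dot (-(∫ p, p ∂Q).2, (∫ p, p ∂Q).1); Q])) •
        (volume : Measure (ℝ × ℝ)).withDensity fun w => ENNReal.ofReal (planeKernel w)) L)) := by
  rw [dual_eq_dot L, charFunDual_smul _ (by positivity), charFunDual_withDensity_planeKernel]
  simp only [charFunDual_smul _ (Real.sqrt_nonneg _),
    charFunDual_smoothedRenewal hQ hnonlattice hmean]
  convert tendsto_sqrt_mul_tsum_walkFourier hQ hnonlattice hmean hN hz _ using 2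
  rw [integral_planeFourier_cexp_neg_variance hQ hnonlattice hmean]
  push_cast
  ring

theorem tendsto_sqrt_mul_tsum_lintegral_sub {g : ℝ × ℝ → ℝ} (hg : Measurable g)
    (hg₀ : ∀ p, 0 ≤ g p) {M : ℝ} (hgM : ∀ p, g p ≤ M * planeKernel p)
    (hcont : ∀ᵐ p : ℝ × ℝ, ContinuousAt g p) :
    Tendsto (fun n => ENNReal.ofReal √(N n) *
        ∑' k, ∫⁻ p, ENNReal.ofReal (g (z n - p)) ∂(iterConv Q k)) atTop
      (𝓝 (ENNReal.ofReal (1 / √(2 * π * Var[dot (-(∫ p, p ∂Q).2, (∫ p, p ∂Q).1); Q])) *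
        ∫⁻ p, ENNReal.ofReal (g p))) := by
  have hvar : 0 < Var[dot (-(∫ p, p ∂Q).2, (∫ p, p ∂Q).1); Q] :=
    variance_dot_pos hQ hnonlattice (by contrapose! hmean; simp_all [Prod.ext_iff])
  have hfinite (n : ℕ) : IsFiniteMeasure (ENNReal.ofReal √(N n) • smoothedRenewal Q (z n)) :=
    have := isFiniteMeasure_smoothedRenewal hQ hnonlattice hmean (z n)
    Measure.smul_finite _ ENNReal.ofReal_ne_top
  set c := 1 / √(2 * π * Var[dot (-(∫ p, p ∂Q).2, (∫ p, p ∂Q).1); Q])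
  have hcpos : 0 < c := by positivity
  let limit : FiniteMeasure (ℝ × ℝ) := ⟨ENNReal.ofReal c •
    (volume : Measure (ℝ × ℝ)).withDensity fun w => ENNReal.ofReal (planeKernel w),
    Measure.smul_finite _ ENNReal.ofReal_ne_top⟩
  have hlimit : limit ≠ 0 := fun h => by
    have hsmul := congrArg FiniteMeasure.toMeasure h
    simp only [limit, FiniteMeasure.toMeasure_mk, FiniteMeasure.toMeasure_zero] at hsmul
    rw [Measure.ennreal_smul_eq_zero] at hsmul
    exact hsmul.elim (ENNReal.ofReal_pos.2 hcpos).ne' withDensity_planeKernel_ne_zero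
  let renewal : ℕ → FiniteMeasure (ℝ × ℝ) := fun n => ⟨_, hfinite n⟩
  have hweak : Tendsto renewal atTop (𝓝 limit) :=
    tendsto_finiteMeasure_of_tendsto_charFunDual hlimit
      (tendsto_charFunDual_smoothedRenewal hQ hnonlattice hmean hN hz)
  have hmain := tendsto_lintegral_ofReal_finiteMeasure hweak hlimit
    (g := fun p => g p / planeKernel p) (by fun_prop)
    (fun p => div_nonneg (hg₀ p) (planeKernel_pos p).le)
    (fun p => (div_le_iff₀ (planeKernel_pos p)).2 (hgM p)) ?_
  · simpa only [limit, renewal, FiniteMeasure.toMeasure_mk, lintegral_smul_measure, smul_eq_mul,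
      lintegral_div_planeKernel_smoothedRenewal _ _ hg,
      lintegral_div_planeKernel_withDensity hg] using hmain
  · have hac : (limit : Measure (ℝ × ℝ)) ≪ volume :=
      Measure.smul_absolutelyContinuous.trans (withDensity_absolutelyContinuous _ _)
    filter_upwards [hac.ae_le hcont] with p hp
    exact hp.div continuous_planeKernel.continuousAt (planeKernel_pos p).ne'

end LocalRenewal

/-! ### Condition (G) -/

section Nonlattice

variable {E : Type*} [NormedAddCommGroup E] [NormedSpace ℝ E] [MeasurableSpace E]

lemma Nonlattice.of_absolutelyContinuous {μ ν : Measure E} (hμ : Nonlattice μ) (hμν : μ ≪ ν) :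
    Nonlattice ν :=
  fun L hL h c hν => hμ L hL h c (hμν.ae_le hν)

lemma Nonlattice.integral_pos {Q : Measure E} (hQ : Nonlattice Q) {L : StrongDual ℝ E} (hL : L ≠ 0)
    (hLQ : Integrable L Q) (hnonneg : ∀ᵐ p ∂Q, 0 ≤ L p) : 0 < ∫ p, L p ∂Q := by
  refine (integral_nonneg_of_ae hnonneg).lt_of_ne' fun hzero => hQ L hL 0 0 ?_
  filter_upwards [(integral_eq_zero_iff_of_nonneg_ae hnonneg hLQ).1 hzero] with p hp
  exact ⟨0, by simpa using hp⟩

lemma isClosed_range_add_mul_intCast (c h : ℝ) : IsClosed (range fun m : ℤ => c + h * m) := by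
  rcases eq_or_ne h 0 with rfl | hh
  · simp only [zero_mul, add_zero, range_const, isClosed_singleton]
  · have hclosed := ((Homeomorph.mulLeft₀ h hh).trans (Homeomorph.addLeft c)).isClosedMap _
      Int.isClosedEmbedding_coe_real.isClosed_range
    rwa [← range_comp] at hclosed

lemma msupport_eq_support (F : Measure (ℝ × ℝ)) : msupport F = F.support := by
  rw [Measure.support_eq_forall_isOpen]
  ext p
  exact forall_congr' fun U => forall_comm

lemma countable_image_closure_msupport {F : Measure (ℝ × ℝ)} {L : StrongDual ℝ (ℝ × ℝ)} {h c : ℝ}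
    (hlattice : ∀ᵐ p ∂F, ∃ m : ℤ, L p = c + h * m) :
    (L '' (AddSubgroup.closure (msupport F) : Set (ℝ × ℝ))).Countable := by
  let lattice : AddSubgroup ℝ := AddSubgroup.zmultiples c ⊔ AddSubgroup.zmultiples h
  have hsupport : msupport F ⊆ L ⁻¹' range fun m : ℤ => c + h * m := by
    rw [msupport_eq_support]
    refine Measure.support_subset_of_isClosed
      ((isClosed_range_add_mul_intCast c h).preimage L.continuous) ?_
    exact hlattice.mono fun p ⟨m, hm⟩ => ⟨m, hm.symm⟩
  have hclosure : AddSubgroup.closure (msupport F) ≤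
      lattice.comap L.toLinearMap.toAddMonoidHom := by
    refine (AddSubgroup.closure_le _).2 fun p hp => ?_
    obtain ⟨m, hm⟩ := hsupport hp
    exact AddSubgroup.mem_sup.2 ⟨c, AddSubgroup.mem_zmultiples c, h * m,
      AddSubgroup.mem_zmultiples_iff.2 ⟨m, by simp [mul_comm]⟩, hm⟩
  refine (countable_range fun k : ℤ × ℤ => k.1 • c + k.2 • h).mono ?_
  rintro _ ⟨p, hp, rfl⟩
  obtain ⟨_, ⟨m, rfl⟩, _, ⟨n, rfl⟩, hmn⟩ := AddSubgroup.mem_sup.1 (hclosure hp)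
  exact ⟨(m, n), hmn⟩

lemma nonlattice_of_quadrant_subset_closure_msupport {F : Measure (ℝ × ℝ)}
    (hG : {p : ℝ × ℝ | 0 ≤ p.1 ∧ 0 ≤ p.2} ⊆
      (AddSubgroup.closure (msupport F) : Set (ℝ × ℝ))) : Nonlattice F := by
  intro L hL h c hlattice
  obtain ⟨v, hv, hLv⟩ : ∃ v : ℝ × ℝ, (0 ≤ v.1 ∧ 0 ≤ v.2) ∧ L v ≠ 0 := by
    by_contra! hzero
    refine hL ?_
    rw [dual_eq_dot L, hzero (1, 0) (by simp), hzero (0, 1) (by simp)]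
    exact dot.map_zero
  have hray : ((fun s => s * L v) '' Ici 0).Countable := by
    refine (countable_image_closure_msupport hlattice).mono ?_
    rintro _ ⟨s, hs, rfl⟩
    exact ⟨s • v, hG ⟨mul_nonneg hs hv.1, mul_nonneg hs hv.2⟩, by simp⟩
  have hIci : (Ici (0 : ℝ)).Countable :=
    countable_of_injective_of_countable_image (mul_left_injective₀ hLv).injOn hray
  simpa using hIci.measure_zero volume

end Nonlattice

/-! ### Exponential tilting -/

section Tilting

/-- The density `e^{-ξs-ηr}` at the point `p = (s, r)`. -/
noncomputable def expWeight (ξ η : ℝ) (p : ℝ × ℝ) : ℝ≥0∞ :=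
  ENNReal.ofReal (Real.exp (-(ξ * p.1 + η * p.2)))

variable {F : Measure (ℝ × ℝ)} {ξ η : ℝ}

@[fun_prop]
lemma measurable_expWeight : Measurable (expWeight ξ η) := by unfold expWeight; fun_prop

lemma expWeight_add (p q : ℝ × ℝ) : expWeight ξ η (p + q) = expWeight ξ η p * expWeight ξ η q := by
  unfold expWeight
  rw [← ENNReal.ofReal_mul (Real.exp_nonneg _), ← Real.exp_add]
  congr 2
  simp only [Prod.fst_add, Prod.snd_add]
  ring

/-- The tilted law `e^{-ξs-ηr} F(ds,dr)`, without normalization: it is a probability measure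
exactly when `φ(ξ, η) = 1`. -/
noncomputable def expTilt (F : Measure (ℝ × ℝ)) (ξ η : ℝ) : Measure (ℝ × ℝ) :=
  F.withDensity (expWeight ξ η)

lemma lintegral_expTilt {f : ℝ × ℝ → ℝ≥0∞} (hf : Measurable f) :
    ∫⁻ p, f p ∂(expTilt F ξ η) = ∫⁻ p, expWeight ξ η p * f p ∂F :=
  lintegral_withDensity_eq_lintegral_mul _ measurable_expWeight hf

lemma expTilt_absolutelyContinuous : expTilt F ξ η ≪ F := withDensity_absolutelyContinuous _ _

lemma absolutelyContinuous_expTilt : F ≪ expTilt F ξ η :=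
  withDensity_absolutelyContinuous' (by fun_prop) (ae_of_all _ fun p => by
    simp [expWeight, Real.exp_pos])

lemma isProbabilityMeasure_expTilt (hζ : biLaplace F ξ η = 1) :
    IsProbabilityMeasure (expTilt F ξ η) :=
  ⟨by simpa only [← lintegral_one, lintegral_expTilt measurable_const, mul_one] using! hζ⟩

lemma sFinite_of_biLaplace_eq_one (hζ : biLaplace F ξ η = 1) : SFinite F :=
  have := isProbabilityMeasure_expTilt hζ
  sFinite_of_absolutelyContinuous (absolutelyContinuous_expTilt (ξ := ξ) (η := η))

lemma lintegral_iterConv_expTilt [SFinite F] (n : ℕ) {f : ℝ × ℝ → ℝ≥0∞} (hf : Measurable f) :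
    ∫⁻ p, f p ∂(iterConv (expTilt F ξ η) n) = ∫⁻ p, expWeight ξ η p * f p ∂(iterConv F n) := by
  have : SFinite (expTilt F ξ η) := by unfold expTilt; infer_instance
  induction n generalizing f with
  | zero => simp [iterConv, expWeight]
  | succ n ih =>
    have hstep : Measurable fun p => ∫⁻ q, f (p + q) ∂(expTilt F ξ η) :=
      Measurable.lintegral_prod_right' (f := fun x : (ℝ × ℝ) × (ℝ × ℝ) => f (x.1 + x.2))
        (by fun_prop)
    unfold iterConv
    rw [lintegral_mconv hf, lintegral_mconv (by fun_prop), ih hstep]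
    refine lintegral_congr fun p => ?_
    rw [lintegral_expTilt (by fun_prop), ← lintegral_const_mul _ (by fun_prop)]
    simp only [expWeight_add, mul_assoc]

lemma integrable_exp_expTilt {u w : ℝ} (h : biLaplace F u w < ⊤) :
    Integrable (fun p : ℝ × ℝ => Real.exp ((ξ - u) * p.1 + (η - w) * p.2)) (expTilt F ξ η) := by
  refine ⟨by fun_prop, ?_⟩
  rw [hasFiniteIntegral_iff_ofReal (ae_of_all _ fun p => Real.exp_nonneg _),
    lintegral_expTilt (by fun_prop)]
  refine h.trans_eq' (lintegral_congr fun p => ?_)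
  rw [expWeight, ← ENNReal.ofReal_mul (Real.exp_nonneg _), ← Real.exp_add]
  congr 2
  ring

lemma memLp_id_two_expTilt
    (hnbd : ∃ ε > 0, ∀ u w : ℝ, |u - ξ| < ε → |w - η| < ε → biLaplace F u w < ⊤) :
    MemLp id 2 (expTilt F ξ η) := by
  obtain ⟨ε, hε, hfin⟩ := hnbd
  have hfst : MemLp Prod.fst 2 (expTilt F ξ η) :=
    ProbabilityTheory.memLp_of_mem_interior_integrableExpSet
      (mem_interior_iff_mem_nhds.2 <| Metric.mem_nhds_iff.2 ⟨ε, hε, fun t ht => by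
        simpa using! integrable_exp_expTilt (ξ := ξ) (η := η)
          (hfin (ξ - t) η (by simpa using ht) (by simpa using hε))⟩) 2
  have hsnd : MemLp Prod.snd 2 (expTilt F ξ η) :=
    ProbabilityTheory.memLp_of_mem_interior_integrableExpSet
      (mem_interior_iff_mem_nhds.2 <| Metric.mem_nhds_iff.2 ⟨ε, hε, fun t ht => by
        simpa using! integrable_exp_expTilt (ξ := ξ) (η := η)
          (hfin ξ (η - t) (by simpa using hε) (by simpa using ht))⟩) 2
  have hid : (id : ℝ × ℝ → ℝ × ℝ) =
      ContinuousLinearMap.inl ℝ ℝ ℝ ∘ Prod.fst + ContinuousLinearMap.inr ℝ ℝ ℝ ∘ Prod.snd := by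
    funext p
    simp
  rw [hid]
  exact ((ContinuousLinearMap.inl ℝ ℝ ℝ).comp_memLp' hfst).add
    ((ContinuousLinearMap.inr ℝ ℝ ℝ).comp_memLp' hsnd)

end Tilting

/-! ### The overshoot kernel -/

section OvershootIntegrand

/-- The contribution of a step `q` to the overshoot kernel at `z`: here `z = (x, y) - p` with `p`
the position of the walk just before the step, so the conditions say that the step crosses `x`,
that `x + a < p.1 + q.1`, and that `p.2 + q.2 ≤ y + b`. -/
noncomputable def overshootIntegrand (ξ η a b : ℝ) (z q : ℝ × ℝ) : ℝ :=
  (Ico 0 (q.1 - a) ×ˢ Ici (q.2 - b)).indicator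
    (fun z => Real.exp (ξ * (q.1 - z.1) + η * (q.2 - z.2))) z

variable {ξ η ε a b : ℝ} {z q : ℝ × ℝ}

@[fun_prop]
lemma measurable_overshootIntegrand {X : Type*} [MeasurableSpace X] {f g : X → ℝ × ℝ}
    (hf : Measurable f) (hg : Measurable g) :
    Measurable fun x => overshootIntegrand ξ η a b (f x) (g x) := by
  have hset : MeasurableSet {x | f x ∈ Ico 0 ((g x).1 - a) ×ˢ Ici ((g x).2 - b)} := by
    simp only [mem_prod, mem_Ico, mem_Ici]
    measurability
  exact Measurable.indicator (f := fun x =>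
    Real.exp (ξ * ((g x).1 - (f x).1) + η * ((g x).2 - (f x).2))) (by fun_prop) hset

lemma overshootIntegrand_nonneg : 0 ≤ overshootIntegrand ξ η a b z q :=
  indicator_nonneg (fun _ _ => Real.exp_nonneg _) _

lemma overshootIntegrand_le (ha : 0 ≤ a) (hε : 0 < ε) (hεη : ε ≤ η) :
    overshootIntegrand ξ η a b z q ≤ Real.exp ((η - ε) * b) *
      Real.exp (-ε * z.1 + -ε * z.2) * Real.exp ((max ξ 0 + ε) * q.1 + ε * q.2) := by
  refine indicator_le' (f := fun z => Real.exp (ξ * (q.1 - z.1) + η * (q.2 - z.2)))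
    (g := fun z => Real.exp ((η - ε) * b) * Real.exp (-ε * z.1 + -ε * z.2) *
      Real.exp ((max ξ 0 + ε) * q.1 + ε * q.2)) (fun z hz => ?_) (fun z _ => by positivity) z
  obtain ⟨⟨hz₀, hza⟩, hzb⟩ := hz
  rw [mem_Ici] at hzb
  rw [← Real.exp_add, ← Real.exp_add, Real.exp_le_exp]
  have hξ : ξ * (q.1 - z.1) ≤ max ξ 0 * (q.1 - z.1) :=
    mul_le_mul_of_nonneg_right (le_max_left _ _) (by linarith)
  have hε₁ : 0 ≤ ε * (q.1 - z.1) := mul_nonneg hε.le (by linarith)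
  have hmax : 0 ≤ max ξ 0 * z.1 := mul_nonneg (le_max_right _ _) hz₀
  have hηb : (η - ε) * (q.2 - z.2) ≤ (η - ε) * b := by gcongr; linarith
  linarith

lemma continuousAt_overshootIntegrand (hz₀ : z.1 ≠ 0) (hza : q.1 - a ≠ z.1) (hzb : q.2 - b ≠ z.2) :
    ContinuousAt (fun w => overshootIntegrand ξ η a b w q) z := by
  refine ContinuousOn.continuousAt_indicator (by fun_prop) fun hfrontier => ?_
  rw [frontier_prod_eq, frontier_Ici] at hfrontier
  rcases hfrontier with ⟨-, h⟩ | ⟨h, -⟩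
  · exact hzb h.symm
  · rcases lt_or_ge 0 (q.1 - a) with hpos | hneg
    · rw [frontier_Ico hpos] at h
      exact h.elim hz₀ fun h => hza h.symm
    · simp [Ico_eq_empty_of_le hneg] at h

lemma ofReal_overshootIntegrand :
    ENNReal.ofReal (overshootIntegrand ξ η a b z q) =
      (Ioc a q.1).indicator (fun s => ENNReal.ofReal (Real.exp (ξ * s))) (q.1 - z.1) *
        (Iic b).indicator (fun r => ENNReal.ofReal (Real.exp (η * r))) (q.2 - z.2) := by
  have hfst : q.1 - z.1 ∈ Ioc a q.1 ↔ z.1 ∈ Ico 0 (q.1 - a) := by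
    constructor <;> exact fun ⟨h₁, h₂⟩ => ⟨by linarith, by linarith⟩
  have hsnd : q.2 - z.2 ∈ Iic b ↔ z.2 ∈ Ici (q.2 - b) := by
    rw [mem_Iic, mem_Ici, sub_le_comm]
  classical
  simp only [overshootIntegrand, indicator_apply, hfst, hsnd, mem_prod, ite_and]
  split_ifs <;> simp [Real.exp_add, ENNReal.ofReal_mul, Real.exp_nonneg]

lemma lintegral_Iic_exp_mul (hη : 0 < η) (b : ℝ) :
    ∫⁻ r in Iic b, ENNReal.ofReal (Real.exp (η * r)) = ENNReal.ofReal (Real.exp (b * η) / η) := by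
  rw [← ofReal_integral_eq_lintegral_ofReal (integrableOn_exp_mul_Iic hη b)
    (ae_of_all _ fun _ => Real.exp_nonneg _), integral_exp_mul_Iic hη, mul_comm]

lemma lintegral_overshootIntegrand (hη : 0 < η) :
    ∫⁻ z, ENNReal.ofReal (overshootIntegrand ξ η a b z q) =
      ENNReal.ofReal (Real.exp (b * η) / η) *
        ∫⁻ s in Ioc a q.1, ENNReal.ofReal (Real.exp (ξ * s)) := by
  let f : ℝ → ℝ≥0∞ := (Ioc a q.1).indicator fun s => ENNReal.ofReal (Real.exp (ξ * s))
  let g : ℝ → ℝ≥0∞ := (Iic b).indicator fun r => ENNReal.ofReal (Real.exp (η * r))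
  have hf : Measurable f := Measurable.indicator (by fun_prop) measurableSet_Ioc
  have hg : Measurable g := Measurable.indicator (by fun_prop) measurableSet_Iic
  calc ∫⁻ z, ENNReal.ofReal (overshootIntegrand ξ η a b z q)
      = ∫⁻ z : ℝ × ℝ, f (q.1 - z.1) * g (q.2 - z.2) :=
        lintegral_congr fun z => ofReal_overshootIntegrand
    _ = (∫⁻ s, f (q.1 - s)) * ∫⁻ r, g (q.2 - r) :=
        lintegral_prod_mul (f := fun s => f (q.1 - s)) (g := fun r => g (q.2 - r))
          (by fun_prop) (by fun_prop)
    _ = _ := by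
        rw [lintegral_sub_left_eq_self, lintegral_sub_left_eq_self, mul_comm,
          lintegral_indicator measurableSet_Iic, lintegral_indicator measurableSet_Ioc,
          lintegral_Iic_exp_mul hη]

end OvershootIntegrand

section OvershootKernel

lemma exists_exp_neg_mul_le_mul_fejerPair {ε : ℝ} (hε : 0 < ε) (B : ℝ) :
    ∃ K, ∀ s, -B ≤ s → Real.exp (-ε * s) ≤ K * fejerPair s := by
  refine ⟨32 * (1 + 2 * B ^ 2 + 4 / ε ^ 2) * Real.exp (ε * B), fun s hs => ?_⟩
  have hquad := Real.quadratic_le_exp_of_nonneg (x := ε * (s + B)) (by nlinarith)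
  have hone : 1 ≤ Real.exp (ε * (s + B)) := Real.one_le_exp (by nlinarith)
  have hsq : 2 * (s + B) ^ 2 ≤ 4 / ε ^ 2 * Real.exp (ε * (s + B)) := by
    rw [div_mul_eq_mul_div, le_div_iff₀ (by positivity)]
    nlinarith
  have hgrowth : 1 + s ^ 2 ≤ (1 + 2 * B ^ 2 + 4 / ε ^ 2) * Real.exp (ε * (s + B)) := by
    nlinarith [sq_nonneg (s + 2 * B), mul_le_mul_of_nonneg_left hone (sq_nonneg B)]
  have hexp : Real.exp (-ε * s) * Real.exp (ε * (s + B)) = Real.exp (ε * B) := by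
    rw [← Real.exp_add]
    ring_nf
  have hfejer : 1 ≤ 32 * (fejerPair s * (1 + s ^ 2)) := by linarith [one_div_le_fejerPair_mul s]
  calc Real.exp (-ε * s)
      ≤ Real.exp (-ε * s) * (32 * (fejerPair s * (1 + s ^ 2))) :=
        le_mul_of_one_le_right (Real.exp_nonneg _) hfejer
    _ ≤ Real.exp (-ε * s) * (32 * (fejerPair s *
          ((1 + 2 * B ^ 2 + 4 / ε ^ 2) * Real.exp (ε * (s + B))))) := by
        gcongr
        exact fejerPair_nonneg s
    _ = _ := by rw [← hexp]; ring

lemma ae_forall_ae_ne {X : Type*} [MeasurableSpace X] {μ : Measure X} [SFinite μ] {f : X → ℝ}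
    (hf : Measurable f) : ∀ᵐ s : ℝ, ∀ᵐ x ∂μ, f x ≠ s := by
  filter_upwards [measure_eq_zero_iff_ae_notMem.1
    ((Measure.countable_meas_level_set_pos (μ := μ) hf).measure_zero volume)] with s hs
  simpa [ae_iff] using hs

lemma lintegral_setLIntegral_Ioc {X : Type*} [MeasurableSpace X] {μ : Measure X} [SFinite μ]
    {f : ℝ → ℝ≥0∞} (hf : Measurable f) {g : X → ℝ} (hg : Measurable g) (a : ℝ) :
    ∫⁻ x, (∫⁻ s in Ioc a (g x), f s) ∂μ = ∫⁻ s in Ioi a, μ {x | s ≤ g x} * f s := by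
  have hset : MeasurableSet {w : X × ℝ | w.2 ≤ g w.1} :=
    measurableSet_le (by fun_prop) (by fun_prop)
  have hind : Measurable ({w : X × ℝ | w.2 ≤ g w.1}.indicator fun w => f w.2) :=
    Measurable.indicator (by fun_prop) hset
  calc ∫⁻ x, (∫⁻ s in Ioc a (g x), f s) ∂μ
      = ∫⁻ x, (∫⁻ s in Ioi a, {w : X × ℝ | w.2 ≤ g w.1}.indicator (fun w => f w.2) (x, s)) ∂μ := by
        refine lintegral_congr fun x => ?_
        rw [← Ioi_inter_Iic, inter_comm, ← setLIntegral_indicator measurableSet_Iic]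
        rfl
    _ = ∫⁻ s in Ioi a, ∫⁻ x, {w : X × ℝ | w.2 ≤ g w.1}.indicator (fun w => f w.2) (x, s) ∂μ :=
        lintegral_lintegral_swap hind.aemeasurable
    _ = _ := lintegral_congr fun s => by
        rw [mul_comm, ← lintegral_indicator_const (measurableSet_le measurable_const hg)]
        rfl

/-- The overshoot kernel `E_ζ[e^{ξ(S₁ - z.1) + η(R₁ - z.2)}; S₁ > z.1 + a, R₁ ≤ z.2 + b]` for
`z.1 ≥ 0`, and `0` for `z.1 < 0`. Its renewal sum against the tilted walk is `G_{a,b}` up to an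
exponential factor. -/
noncomputable def overshootKernel (Q : Measure (ℝ × ℝ)) (ξ η a b : ℝ) (z : ℝ × ℝ) : ℝ :=
  ∫ q, overshootIntegrand ξ η a b z q ∂Q

variable {Q : Measure (ℝ × ℝ)} {ξ η ε a b : ℝ}

lemma overshootKernel_nonneg (z : ℝ × ℝ) : 0 ≤ overshootKernel Q ξ η a b z :=
  integral_nonneg fun _ => overshootIntegrand_nonneg

@[fun_prop]
lemma measurable_overshootKernel [SFinite Q] : Measurable (overshootKernel Q ξ η a b) :=
  (StronglyMeasurable.integral_prod_right (f := fun z q => overshootIntegrand ξ η a b z q)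
    (Measurable.stronglyMeasurable (by fun_prop))).measurable

lemma overshootKernel_eq_zero (hQ : ∀ᵐ p ∂Q, 0 ≤ p.1 ∧ 0 ≤ p.2) {z : ℝ × ℝ}
    (hz : ¬(0 ≤ z.1 ∧ -|b| ≤ z.2)) : overshootKernel Q ξ η a b z = 0 := by
  refine integral_eq_zero_of_ae ?_
  filter_upwards [hQ] with q hq
  refine indicator_of_notMem (fun hmem => hz ⟨hmem.1.1, ?_⟩) _
  have := mem_Ici.1 hmem.2
  linarith [le_abs_self b]

variable (ha : 0 ≤ a) (hε : 0 < ε) (hεη : ε ≤ η)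
  (hmoment : Integrable (fun q : ℝ × ℝ => Real.exp ((max ξ 0 + ε) * q.1 + ε * q.2)) Q)
include ha hε hεη hmoment

lemma integrable_overshootIntegrand (z : ℝ × ℝ) :
    Integrable (overshootIntegrand ξ η a b z) Q := by
  refine (hmoment.const_mul (Real.exp ((η - ε) * b) * Real.exp (-ε * z.1 + -ε * z.2))).mono'
    (Measurable.aestronglyMeasurable (by fun_prop)) (ae_of_all _ fun q => ?_)
  rw [Real.norm_of_nonneg overshootIntegrand_nonneg]
  exact overshootIntegrand_le ha hε hεη

lemma ofReal_overshootKernel (z : ℝ × ℝ) : ENNReal.ofReal (overshootKernel Q ξ η a b z) =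
    ∫⁻ q, ENNReal.ofReal (overshootIntegrand ξ η a b z q) ∂Q :=
  ofReal_integral_eq_lintegral_ofReal (integrable_overshootIntegrand ha hε hεη hmoment z)
    (ae_of_all _ fun _ => overshootIntegrand_nonneg)

lemma overshootKernel_le (z : ℝ × ℝ) : overshootKernel Q ξ η a b z ≤
    Real.exp ((η - ε) * b) * Real.exp (-ε * z.1 + -ε * z.2) *
      ∫ q, Real.exp ((max ξ 0 + ε) * q.1 + ε * q.2) ∂Q := by
  rw [← integral_const_mul]
  exact integral_mono (integrable_overshootIntegrand ha hε hεη hmoment z)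
    (hmoment.const_mul _) fun q => overshootIntegrand_le ha hε hεη

lemma exists_overshootKernel_le_mul_planeKernel (hQ : ∀ᵐ p ∂Q, 0 ≤ p.1 ∧ 0 ≤ p.2) :
    ∃ M, ∀ z, overshootKernel Q ξ η a b z ≤ M * planeKernel z := by
  obtain ⟨K, hK⟩ := exists_exp_neg_mul_le_mul_fejerPair hε |b|
  set I := ∫ q, Real.exp ((max ξ 0 + ε) * q.1 + ε * q.2) ∂Q
  have hI : 0 ≤ I := integral_nonneg fun q => Real.exp_nonneg _
  refine ⟨Real.exp ((η - ε) * b) * K ^ 2 * I, fun z => ?_⟩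
  by_cases hz : 0 ≤ z.1 ∧ -|b| ≤ z.2
  · have hfst := hK z.1 ((neg_nonpos.2 (abs_nonneg b)).trans hz.1)
    calc overshootKernel Q ξ η a b z
        ≤ Real.exp ((η - ε) * b) * Real.exp (-ε * z.1 + -ε * z.2) * I :=
          overshootKernel_le ha hε hεη hmoment z
      _ = Real.exp ((η - ε) * b) * (Real.exp (-ε * z.1) * Real.exp (-ε * z.2)) * I := by
          rw [Real.exp_add]
      _ ≤ Real.exp ((η - ε) * b) * ((K * fejerPair z.1) * (K * fejerPair z.2)) * I := by
          gcongr
          · exact (Real.exp_nonneg _).trans hfst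
          · exact hK z.2 hz.2
      _ = _ := by unfold planeKernel; ring
  · rw [overshootKernel_eq_zero hQ hz]
    have := planeKernel_pos z
    positivity

lemma ae_continuousAt_overshootKernel [SFinite Q] :
    ∀ᵐ z : ℝ × ℝ, ContinuousAt (overshootKernel Q ξ η a b) z := by
  have hfst : ∀ᵐ z : ℝ × ℝ, ∀ᵐ q ∂Q, q.1 - a ≠ z.1 :=
    Measure.quasiMeasurePreserving_fst.ae (ae_forall_ae_ne (by fun_prop))
  have hsnd : ∀ᵐ z : ℝ × ℝ, ∀ᵐ q ∂Q, q.2 - b ≠ z.2 :=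
    Measure.quasiMeasurePreserving_snd.ae (ae_forall_ae_ne (by fun_prop))
  have hzero : ∀ᵐ z : ℝ × ℝ, z.1 ≠ 0 :=
    Measure.quasiMeasurePreserving_fst.ae (p := fun s : ℝ => s ≠ 0) (Measure.ae_ne volume 0)
  filter_upwards [hfst, hsnd, hzero] with z hza hzb hz₀
  let C : ℝ × ℝ → ℝ := fun w => Real.exp ((η - ε) * b) * Real.exp (-ε * w.1 + -ε * w.2)
  have hC : ∀ᶠ w in 𝓝 z, C w < C z + 1 :=
    ContinuousAt.eventually_lt (f := C) (by fun_prop) continuousAt_const (by linarith)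
  refine continuousAt_of_dominated
    (bound := fun q => (C z + 1) * Real.exp ((max ξ 0 + ε) * q.1 + ε * q.2))
    (.of_forall fun w => Measurable.aestronglyMeasurable (by fun_prop)) ?_
    (hmoment.const_mul _) ?_
  · filter_upwards [hC] with w hw
    refine ae_of_all _ fun q => ?_
    rw [Real.norm_of_nonneg overshootIntegrand_nonneg]
    exact (overshootIntegrand_le ha hε hεη).trans (by gcongr)
  · filter_upwards [hza, hzb] with q hqa hqb
    exact continuousAt_overshootIntegrand hz₀ hqa hqb

lemma lintegral_overshootKernel [SFinite Q] :
    ∫⁻ z, ENNReal.ofReal (overshootKernel Q ξ η a b z) = ENNReal.ofReal (Real.exp (b * η) / η) *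
      ∫⁻ s in Ioi a, Q {p | s ≤ p.1} * ENNReal.ofReal (Real.exp (ξ * s)) := by
  simp only [ofReal_overshootKernel ha hε hεη hmoment]
  rw [lintegral_lintegral_swap (by unfold Function.uncurry; fun_prop)]
  simp only [lintegral_overshootIntegrand (hε.trans_le hεη)]
  rw [lintegral_const_mul' _ _ ENNReal.ofReal_ne_top,
    lintegral_setLIntegral_Ioc (by fun_prop) measurable_fst]

lemma toReal_lintegral_overshootKernel [IsFiniteMeasure Q] :
    (∫⁻ z, ENNReal.ofReal (overshootKernel Q ξ η a b z)).toReal = Real.exp (b * η) / η *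
      ∫ s in Ioi a, (Q {p | s ≤ p.1}).toReal * Real.exp (ξ * s) := by
  have hη : 0 < η := hε.trans_le hεη
  have htail : Antitone fun s : ℝ => (Q {p | s ≤ p.1}).toReal := fun s t hst =>
    ENNReal.toReal_mono (measure_ne_top _ _) (measure_mono fun p hp => hst.trans hp)
  have hmeas := htail.measurable
  rw [lintegral_overshootKernel ha hε hεη hmoment, ENNReal.toReal_mul,
    ENNReal.toReal_ofReal (by positivity), integral_eq_lintegral_of_nonneg_ae
      (ae_of_all _ fun s => by positivity) (Measurable.aestronglyMeasurable (by fun_prop))]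
  simp only [ENNReal.ofReal_mul ENNReal.toReal_nonneg, ENNReal.ofReal_toReal (measure_ne_top _ _)]

end OvershootKernel

/-! ### Asymptotics of the crossing probabilities -/

section CrossingSum

variable {F : Measure (ℝ × ℝ)} {ξ η : ℝ}

lemma exists_integrable_exp_expTilt (hη : 0 < η)
    (hnbd : ∃ ε > 0, ∀ u w : ℝ, |u - ξ| < ε → |w - η| < ε → biLaplace F u w < ⊤)
    (hnbd0 : ∃ ε > 0, ∀ u w : ℝ, |u| < ε → |w - η| < ε → biLaplace F u w < ⊤) :
    ∃ ε, 0 < ε ∧ ε ≤ η ∧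
      Integrable (fun q : ℝ × ℝ => Real.exp ((max ξ 0 + ε) * q.1 + ε * q.2)) (expTilt F ξ η) := by
  obtain ⟨δ, hδ, hfin⟩ : ∃ δ > 0, ∀ u w : ℝ, |u - (ξ - max ξ 0)| < δ → |w - η| < δ →
      biLaplace F u w < ⊤ := by
    rcases le_total 0 ξ with h | h
    · simpa only [max_eq_left h, sub_self, sub_zero] using hnbd0
    · simpa only [max_eq_right h, sub_zero] using hnbd
  have hε : 0 < min (δ / 2) η := lt_min (half_pos hδ) hη
  have hεδ : |min (δ / 2) η| < δ := by
    rw [abs_of_pos hε]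
    exact (min_le_left _ _).trans_lt (half_lt_self hδ)
  refine ⟨min (δ / 2) η, hε, min_le_right _ _, ?_⟩
  have hint := integrable_exp_expTilt (ξ := ξ) (η := η)
    (hfin (ξ - max ξ 0 - min (δ / 2) η) (η - min (δ / 2) η) (by simpa) (by simpa))
  convert hint using 4 <;> ring

variable {ε a b : ℝ}

lemma expWeight_mul_ofReal_overshootIntegrand (x y : ℝ) (p q : ℝ × ℝ) :
    expWeight ξ η p * (expWeight ξ η q *
        ENNReal.ofReal (overshootIntegrand ξ η a b ((x, y) - p) q)) =
      ENNReal.ofReal (Real.exp (-(x * ξ + y * η))) *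
        {p : ℝ × ℝ | p.1 ≤ x}.indicator (fun p =>
          {q : ℝ × ℝ | x + a < p.1 + q.1 ∧ p.2 + q.2 ≤ y + b}.indicator 1 q) p := by
  classical
  have hmem : (x, y) - p ∈ Ico 0 (q.1 - a) ×ˢ Ici (q.2 - b) ↔
      p.1 ≤ x ∧ x + a < p.1 + q.1 ∧ p.2 + q.2 ≤ y + b := by
    simp only [mem_prod, mem_Ico, mem_Ici, Prod.fst_sub, Prod.snd_sub, sub_nonneg, and_assoc]
    exact and_congr_right fun _ => and_congr (by constructor <;> intro <;> linarith)
      (by constructor <;> intro <;> linarith)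
  simp only [overshootIntegrand, indicator_apply, hmem, mem_ofPred_eq, Pi.one_apply, ite_and]
  split_ifs
  · simp only [expWeight, ← ENNReal.ofReal_mul (Real.exp_nonneg _), ← Real.exp_add, mul_one]
    congr 2
    simp only [Prod.fst_sub, Prod.snd_sub]
    ring
  all_goals simp

lemma tsum_lintegral_overshootKernel [SFinite F] (ha : 0 ≤ a) (hε : 0 < ε) (hεη : ε ≤ η)
    (hmoment : Integrable (fun q : ℝ × ℝ => Real.exp ((max ξ 0 + ε) * q.1 + ε * q.2))
      (expTilt F ξ η)) (x y : ℝ) :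
    ∑' k, ∫⁻ p, ENNReal.ofReal (overshootKernel (expTilt F ξ η) ξ η a b ((x, y) - p))
        ∂(iterConv (expTilt F ξ η) k) =
      ENNReal.ofReal (Real.exp (-(x * ξ + y * η))) * hoglundG F a b x y := by
  have : SFinite (expTilt F ξ η) := by unfold expTilt; infer_instance
  unfold hoglundG
  rw [← ENNReal.tsum_mul_left]
  refine tsum_congr fun k => ?_
  rw [lintegral_iterConv_expTilt k (by fun_prop),
    ← lintegral_indicator (measurableSet_le (by fun_prop) (by fun_prop)),
    ← lintegral_const_mul' _ _ ENNReal.ofReal_ne_top]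
  refine lintegral_congr fun p => ?_
  have hset : MeasurableSet {q : ℝ × ℝ | x + a < p.1 + q.1 ∧ p.2 + q.2 ≤ y + b} := by
    measurability
  rw [ofReal_overshootKernel ha hε hεη hmoment, lintegral_expTilt (by fun_prop),
    ← lintegral_const_mul _ (by fun_prop)]
  simp only [expWeight_mul_ofReal_overshootIntegrand]
  rw [lintegral_const_mul' _ _ ENNReal.ofReal_ne_top]
  by_cases hp : p ∈ {p : ℝ × ℝ | p.1 ≤ x}
  · simp only [indicator_of_mem hp, lintegral_indicator_one hset]
  · simp only [indicator_of_notMem hp, lintegral_zero]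

end CrossingSum

section Scaling

variable {x y : ℕ → ℝ}

lemma tendsto_div_of_tendsto_sub_div_sqrt {v : ℝ} (hy : Tendsto y atTop atTop)
    (hx : Tendsto (fun n => (x n - v * y n) / √(y n)) atTop (𝓝 0)) :
    Tendsto (fun n => x n / y n) atTop (𝓝 v) := by
  have hlim := (hx.mul (Real.tendsto_sqrt_atTop.comp hy).inv_tendsto_atTop).add_const v
  rw [zero_mul, zero_add] at hlim
  refine hlim.congr' ?_
  filter_upwards [hy.eventually_gt_atTop 0] with n hn
  have hsqrt : √(y n) * √(y n) = y n := Real.mul_self_sqrt hn.le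
  simp only [Pi.inv_apply, Function.comp_apply]
  rw [← div_eq_mul_inv, div_div, hsqrt]
  field_simp
  ring

variable {m : ℝ × ℝ} (hm₁ : 0 < m.1) (hm₂ : 0 < m.2) (hy : Tendsto y atTop atTop)
  (hx : Tendsto (fun n => (x n - m.1 / m.2 * y n) / √(y n)) atTop (𝓝 0))
include hm₁ hm₂ hy hx

lemma tendsto_div_atTop_of_tendsto_sub_div_sqrt : Tendsto (fun n => x n / m.1) atTop atTop := by
  have hlim := (tendsto_div_of_tendsto_sub_div_sqrt hy hx).pos_mul_atTop (by positivity) hy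
  refine (hlim.atTop_div_const hm₁).congr' ?_
  filter_upwards [hy.eventually_gt_atTop 0] with n hn
  rw [div_mul_cancel₀ _ hn.ne']

lemma tendsto_inv_sqrt_smul_sub :
    Tendsto (fun n => (√(x n / m.1))⁻¹ • ((x n, y n) - (x n / m.1) • m)) atTop (𝓝 0) := by
  have hratio : Tendsto (fun n => √(y n) / √(x n / m.1)) atTop (𝓝 √m.2) := by
    have hlim := (((tendsto_div_of_tendsto_sub_div_sqrt hy hx).inv₀
      (by positivity)).mul_const m.1).sqrt
    rw [inv_div, div_mul_cancel₀ _ hm₁.ne'] at hlim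
    refine hlim.congr' ?_
    filter_upwards [hy.eventually_gt_atTop 0] with n hn
    rw [← Real.sqrt_div hn.le, inv_div, div_div_eq_mul_div, div_mul_eq_mul_div]
  have hsnd := (hx.mul hratio).const_mul (-(m.2 / m.1))
  rw [zero_mul, mul_zero] at hsnd
  refine (tendsto_const_nhds (x := (0 : ℝ)).prodMk_nhds hsnd).congr' ?_
  filter_upwards [hy.eventually_gt_atTop 0] with n hyn
  have hsqrt : √(y n) ≠ 0 := (Real.sqrt_pos.2 hyn).ne'
  ext
  · simp [div_mul_cancel₀ _ hm₁.ne']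
  · simp only [Prod.snd_sub, Prod.smul_snd, smul_eq_mul]
    generalize √(x n / m.1) = r
    field_simp
    ring

end Scaling

section TiltedMean

open ProbabilityTheory

variable {Q : Measure (ℝ × ℝ)} [IsProbabilityMeasure Q]

lemma mean_pos (hQ : MemLp id 2 Q) (hnonlattice : Nonlattice Q)
    (hnonneg : ∀ᵐ p ∂Q, 0 ≤ p.1 ∧ 0 ≤ p.2) : 0 < (∫ p, p ∂Q).1 ∧ 0 < (∫ p, p ∂Q).2 := by
  have hint : Integrable (fun p => p) Q := hQ.integrable one_le_two
  constructor
  · rw [fst_integral hint]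
    exact hnonlattice.integral_pos (L := ContinuousLinearMap.fst ℝ ℝ ℝ)
      (DFunLike.ne_iff.2 ⟨(1, 0), by simp⟩) hint.fst (hnonneg.mono fun p hp => hp.1)
  · rw [snd_integral hint]
    exact hnonlattice.integral_pos (L := ContinuousLinearMap.snd ℝ ℝ ℝ)
      (DFunLike.ne_iff.2 ⟨(0, 1), by simp⟩) hint.snd (hnonneg.mono fun p hp => hp.2)

lemma variance_dot_mean (hQ : MemLp id 2 Q) :
    Var[dot (-(∫ p, p ∂Q).2, (∫ p, p ∂Q).1); Q] =
      ∫ p, (p.2 * (∫ p, p ∂Q).1 - p.1 * (∫ p, p ∂Q).2) ^ 2 ∂Q := by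
  have hmean : Q[dot (-(∫ p, p ∂Q).2, (∫ p, p ∂Q).1)] = 0 := by
    have hint : Integrable (fun p => p) Q := hQ.integrable one_le_two
    rw [ContinuousLinearMap.integral_comp_comm _ hint, dot_apply]
    ring
  rw [variance_of_integral_eq_zero (by fun_prop) hmean]
  refine integral_congr_ae (ae_of_all _ fun p => ?_)
  simp only [dot_apply]
  ring

end TiltedMean

section CrossingAsymptotics

open ProbabilityTheory

variable {F : Measure (ℝ × ℝ)} {ξ η : ℝ}

lemma ae_nonneg_expTilt (hFsupp : F {p : ℝ × ℝ | p.1 < 0 ∨ p.2 < 0} = 0) :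
    ∀ᵐ p ∂(expTilt F ξ η), 0 ≤ p.1 ∧ 0 ≤ p.2 := by
  filter_upwards [expTilt_absolutelyContinuous.ae_le (measure_eq_zero_iff_ae_notMem.1 hFsupp)]
    with p hp
  simpa only [mem_ofPred_eq, not_or, not_lt] using hp

lemma tendsto_sqrt_mul_hoglundG (hFsupp : F {p : ℝ × ℝ | p.1 < 0 ∨ p.2 < 0} = 0)
    (hnonlattice : Nonlattice F) (hη : 0 < η) (hζ : biLaplace F ξ η = 1)
    (hnbd : ∃ ε > 0, ∀ u w : ℝ, |u - ξ| < ε → |w - η| < ε → biLaplace F u w < ⊤)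
    (hnbd0 : ∃ ε > 0, ∀ u w : ℝ, |u| < ε → |w - η| < ε → biLaplace F u w < ⊤)
    {m : ℝ × ℝ} (hm : ∫ p, p ∂(expTilt F ξ η) = m) {a b : ℝ} (ha : 0 ≤ a) {x y : ℕ → ℝ}
    (hy : Tendsto y atTop atTop)
    (hxy : Tendsto (fun n => (x n - m.1 / m.2 * y n) / √(y n)) atTop (𝓝 0)) :
    Tendsto (fun n => √(x n / m.1) *
        (Real.exp (-(x n * ξ + y n * η)) * (hoglundG F a b (x n) (y n)).toReal)) atTop
      (𝓝 (1 / √(2 * π * Var[dot (-m.2, m.1); expTilt F ξ η]) * (Real.exp (b * η) / η *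
        ∫ s in Ioi a, ((expTilt F ξ η) {p | s ≤ p.1}).toReal * Real.exp (ξ * s)))) := by
  have := isProbabilityMeasure_expTilt hζ
  have := sFinite_of_biLaplace_eq_one hζ
  have hnonneg := ae_nonneg_expTilt (ξ := ξ) (η := η) hFsupp
  have htilt : Nonlattice (expTilt F ξ η) :=
    hnonlattice.of_absolutelyContinuous absolutelyContinuous_expTilt
  have hQ := memLp_id_two_expTilt hnbd
  obtain ⟨hm₁, hm₂⟩ := hm ▸ mean_pos hQ htilt hnonneg
  obtain ⟨ε, hε, hεη, hmoment⟩ := exists_integrable_exp_expTilt hη hnbd hnbd0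
  obtain ⟨M, hM⟩ :=
    exists_overshootKernel_le_mul_planeKernel (b := b) ha hε hεη hmoment hnonneg
  have hrenewal := tendsto_sqrt_mul_tsum_lintegral_sub hQ htilt
    (by rw [hm]; exact fun h => hm₁.ne' (by rw [h, Prod.fst_zero]))
    (tendsto_div_atTop_of_tendsto_sub_div_sqrt hm₁ hm₂ hy hxy)
    (by rw [hm]; exact tendsto_inv_sqrt_smul_sub hm₁ hm₂ hy hxy)
    measurable_overshootKernel overshootKernel_nonneg hM
    (ae_continuousAt_overshootKernel ha hε hεη hmoment)
  have hfinite : ∫⁻ z, ENNReal.ofReal (overshootKernel (expTilt F ξ η) ξ η a b z) ≠ ⊤ :=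
    ((lintegral_mono fun z => ENNReal.ofReal_le_ofReal (hM z)).trans_lt
      (integrable_planeKernel.const_mul M).lintegral_lt_top).ne
  have hlim := (ENNReal.tendsto_toReal (ENNReal.mul_ne_top ENNReal.ofReal_ne_top hfinite)).comp
    hrenewal
  rw [hm, ENNReal.toReal_mul, ENNReal.toReal_ofReal (by positivity),
    toReal_lintegral_overshootKernel ha hε hεη hmoment] at hlim
  refine hlim.congr fun n => ?_
  rw [Function.comp_apply, tsum_lintegral_overshootKernel ha hε hεη hmoment, ENNReal.toReal_mul,
    ENNReal.toReal_mul, ENNReal.toReal_ofReal (Real.sqrt_nonneg _),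
    ENNReal.toReal_ofReal (Real.exp_nonneg _)]

end CrossingAsymptotics

section Normalization

lemma div_rpow_neg_half_mul_exp {m x : ℝ} (hm : 0 < m) (hx : 0 < x) (E G : ℝ) :
    G / (x ^ (-(1 : ℝ) / 2) * Real.exp E) = √m * (√(x / m) * (Real.exp (-E) * G)) := by
  have hsqrt : √m ≠ 0 := (Real.sqrt_pos.2 hm).ne'
  rw [neg_div, Real.rpow_neg hx.le, ← Real.sqrt_eq_rpow, Real.sqrt_div hx.le, Real.exp_neg]
  field_simp

lemma sqrt_mul_inv_sqrt_variance {m : ℝ} (hm : 0 < m) (W c : ℝ) :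
    √m * (1 / √(2 * π * W) * c) = c / m * (√(2 * π * (W / m ^ 3)))⁻¹ := by
  have hcube : √(m ^ 3) = m * √m := by
    rw [pow_succ, Real.sqrt_mul (by positivity), Real.sqrt_sq hm.le]
  rw [← mul_div_assoc, Real.sqrt_div' _ (by positivity), hcube, inv_div]
  field_simp

end Normalization

end Hoglund

theorem hoglund_renewal_G_general (F : Measure (ℝ × ℝ))
    (hFsupp : F {p : ℝ × ℝ | p.1 < 0 ∨ p.2 < 0} = 0) (hnonlattice : Hoglund.Nonlattice F)
    (ξ η : ℝ) (hη : 0 < η) (hζ : biLaplace F ξ η = 1)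
    (hnbd : ∃ ε > 0, ∀ u w : ℝ, |u - ξ| < ε → |w - η| < ε → biLaplace F u w < ⊤)
    (hnbd0 : ∃ ε > 0, ∀ u w : ℝ, |u| < ε → |w - η| < ε → biLaplace F u w < ⊤)
    (Fζ : Measure (ℝ × ℝ)) (hFζ : Fζ = Hoglund.expTilt F ξ η)
    (mS mR v V : ℝ) (hmS : mS = ∫ p, p.1 ∂Fζ) (hmR : mR = ∫ p, p.2 ∂Fζ) (hv : v = mS / mR)
    (hV : V = (∫ p, (p.2 * mS - p.1 * mR) ^ 2 ∂Fζ) / mS ^ 3) :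
    0 < V ∧ ∀ a b : ℝ, 0 ≤ a → ∀ x y : ℕ → ℝ, Tendsto y atTop atTop →
      Tendsto (fun n => (x n - v * y n) / √(y n)) atTop (nhds 0) →
      Tendsto (fun n => (hoglundG F a b (x n) (y n)).toReal /
          (x n ^ (-(1 : ℝ) / 2) * Real.exp (x n * ξ + y n * η))) atTop
        (nhds ((Real.exp (b * η) / (|η| * mS) *
            ∫ s in Ioi a, (Fζ {p : ℝ × ℝ | s ≤ p.1}).toReal * Real.exp (ξ * s)) *
          (√(2 * Real.pi * V))⁻¹)) := by
  subst hFζ hv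
  have := Hoglund.isProbabilityMeasure_expTilt hζ
  have hQ := Hoglund.memLp_id_two_expTilt hnbd
  have htilt := hnonlattice.of_absolutelyContinuous
    (Hoglund.absolutelyContinuous_expTilt (ξ := ξ) (η := η))
  have hmean : ∫ p, p ∂(Hoglund.expTilt F ξ η) = (mS, mR) := by
    have hint : Integrable (fun p => p) (Hoglund.expTilt F ξ η) := hQ.integrable one_le_two
    rw [hmS, hmR, ← fst_integral hint, ← snd_integral hint]
  obtain ⟨hmS₀, hmR₀⟩ : 0 < mS ∧ 0 < mR := by
    simpa only [hmean] using Hoglund.mean_pos hQ htilt (Hoglund.ae_nonneg_expTilt hFsupp)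
  have hvariance := Hoglund.variance_dot_mean hQ
  rw [hmean] at hvariance
  have hW := Hoglund.variance_dot_pos hQ htilt (t := (-mR, mS)) (by simp [hmS₀.ne'])
  refine ⟨by rw [hV, ← hvariance]; positivity, fun a b ha x y hy hxy => ?_⟩
  have hlim := (Hoglund.tendsto_sqrt_mul_hoglundG hFsupp hnonlattice hη hζ hnbd hnbd0 hmean
    (b := b) ha hy hxy).const_mul √mS
  rw [Hoglund.sqrt_mul_inv_sqrt_variance hmS₀, hvariance, ← hV] at hlim
  rw [abs_of_pos hη, ← div_div, div_mul_eq_mul_div]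
  refine hlim.congr' ?_
  filter_upwards [(Hoglund.tendsto_div_atTop_of_tendsto_sub_div_sqrt (m := (mS, mR)) hmS₀ hmR₀ hy
    hxy).eventually_gt_atTop 0] with n hn
  exact (Hoglund.div_rpow_neg_half_mul_exp hmS₀ ((div_pos_iff_of_pos_right hmS₀).1 hn) _ _).symm

/-- Höglund's two-dimensional renewal theorem, upcrossing version (`η > 0`):
under condition (G), if `φ(ζ) = 1` for `ζ = (ξ,η)` with `η > 0`, `φ` finite near `ζ`
and near `(0,η)`, and `v = E_ζ[S₁]/E_ζ[R₁]`, then `V(ζ) > 0` and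
`G_{a,b}(x_n,y_n) ∼ D(a,b) x_n^{-1/2} e^{x_n ξ + y_n η}` as `y_n → ∞`,
`x_n = v y_n + o(y_n^{1/2})`, where `D(a,b) = C(a,b) (2π V(ζ))^{-1/2}`. -/
theorem hoglund_renewal_G (F : Measure (ℝ × ℝ))
    -- `F` is a subprobability measure on `[0,∞)²`
    (hFsupp : F {p : ℝ × ℝ | p.1 < 0 ∨ p.2 < 0} = 0)
    (hFmass : F Set.univ ≤ 1)
    -- condition (G)
    (hG : {p : ℝ × ℝ | 0 ≤ p.1 ∧ 0 ≤ p.2} ⊆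
      (AddSubgroup.closure (msupport F) : Set (ℝ × ℝ)))
    (ξ η : ℝ) (hη : 0 < η)
    -- `φ(ζ) = 1`
    (hζ : biLaplace F ξ η = 1)
    -- `φ` finite in a neighbourhood of `ζ` and of `(0,η)`
    (hnbd : ∃ ε > 0, ∀ u w : ℝ, |u - ξ| < ε → |w - η| < ε → biLaplace F u w < ⊤)
    (hnbd0 : ∃ ε > 0, ∀ u w : ℝ, |u| < ε → |w - η| < ε → biLaplace F u w < ⊤)
    -- the tilted step law `F_ζ(ds,dr) = e^{-ξs-ηr} F(ds,dr)` (using `φ(ζ) = 1`)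
    (Fζ : Measure (ℝ × ℝ))
    (hFζ : Fζ = F.withDensity (fun p => ENNReal.ofReal (Real.exp (-(ξ * p.1 + η * p.2)))))
    -- `mS = E_ζ[S₁]`, `mR = E_ζ[R₁]`, `v = mS/mR`, `V = V(ζ)`
    (mS mR v V : ℝ)
    (hmS : mS = ∫ p, p.1 ∂Fζ) (hmR : mR = ∫ p, p.2 ∂Fζ)
    (hv : v = mS / mR)
    (hV : V = (∫ p, (p.2 * mS - p.1 * mR) ^ 2 ∂Fζ) / mS ^ 3) :
    0 < V ∧
    ∀ a b : ℝ, 0 ≤ a → ∀ x y : ℕ → ℝ,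
      Tendsto y atTop atTop → (∀ n, 0 < x n) →
      Tendsto (fun n => (x n - v * y n) / Real.sqrt (y n)) atTop (nhds 0) →
      Tendsto (fun n => (hoglundG F a b (x n) (y n)).toReal /
          (x n ^ (-(1:ℝ) / 2) * Real.exp (x n * ξ + y n * η))) atTop
        (nhds ((Real.exp (b * η) / (|η| * mS) *
            ∫ s in Set.Ioi a, (Fζ {p : ℝ × ℝ | s ≤ p.1}).toReal * Real.exp (ξ * s)) *
          (Real.sqrt (2 * Real.pi * V))⁻¹)) := by
  obtain ⟨hVpos, hlim⟩ := hoglund_renewal_G_general F hFsupp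
    (Hoglund.nonlattice_of_quadrant_subset_closure_msupport hG) ξ η hη hζ hnbd hnbd0 Fζ hFζ
    mS mR v V hmS hmR hv hV
  exact ⟨hVpos, fun a b ha x y hy _ => hlim a b ha x y hy⟩
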